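/- (Özaydin–Volovikov lemma.) Let a be a prime, G = (ℤ/a)^m, and k ≥ 0 an integer. Suppose G acts continuously and without fixed points on a topological space Y and on the sphere S^k, and Y is k-acyclic with ℤ/a coefficients (Y is non-empty and H̃_j(Y; ℤ/a) = 0 for every j ≤ k). Then there does not exist a G-equivariant continuous map Y → S^k. -/

import Mathlib

open CategoryTheory Geometry

/-- The singular chain complex functor with coefficients in a commutative ring `R`,
obtained from the singular simplicial set by applying the free `R`-module functor levelwise
and taking the alternating face map complex. -/
noncomputable def singularChainComplexFunctor (R : Type) [CommRing R] :
    TopCat.{0} ⥤ ChainComplex (ModuleCat R) ℕ :=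
  TopCat.toSSet ⋙ ((SimplicialObject.whiskering _ _).obj (ModuleCat.free R)) ⋙
    AlgebraicTopology.alternatingFaceMapComplex _

/-- Singular homology `H_n(X; R)`. -/
noncomputable def singularHomology (R : Type) [CommRing R] (n : ℕ)
    (X : Type) [TopologicalSpace X] : ModuleCat R :=
  ((singularChainComplexFunctor R).obj (TopCat.of X)).homology n

/-- A space is `n`-acyclic (with `ℤ/a` coefficients) if it is non-empty and its reduced singular
homology with `ℤ/a` coefficients vanishes in all degrees `j ≤ n`; equivalently (over the field
`ℤ/a`), it is non-empty and its unreduced singular homology is isomorphic to that of a point in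
all degrees `j ≤ n`. -/
def IsAcyclicSpace (a : ℕ) (X : Type) [TopologicalSpace X] (n : ℤ) : Prop :=
  Nonempty X ∧ ∀ j : ℕ, (j : ℤ) ≤ n →
    Nonempty ((singularHomology (ZMod a) j X) ≅ (singularHomology (ZMod a) j PUnit))

/-!
Let `x = ∑ i, t i * (g i - 1)` in the group algebra of `(ℤ/a)^m` over `K = 𝔽_a(t)`, where the `g i`
are the standard generators; then `x ^ a = 0`. If the group acts on a set without fixed points, each
orbit admits a nonzero character of the group vanishing on its stabilizer. Multiplication by such
characters, suitably normalized, is an operator `D` with `D x = x D + 1` on the `K`-valued chains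
on the set, so `x` behaves like a truncated derivative: the chains are free over `K[x]/(x ^ a)`.

Acyclicity of `Y` lifts the periodic resolution of `K` over `K[x]/(x ^ a)`, truncated in degree
`k + 1`, to singular chains of `Y`. Subdividing and mapping by an equivariant `F : Y → X` gives
arbitrarily fine such lifts in ordered chains of `X`. If `X` has covering dimension at most `k`,
fine cycles of degree greater than `k` bound fine chains, so the lifts can be prolonged at will.
Now move the vertices to finitely many orbits and sort them by orbit, equivariantly: a fine simplex
with more vertices than there are orbits becomes degenerate, so a long enough lift vanishes in its
top degree. By freeness this vanishing descends to degree `0`, where the augmentation is `1`.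
-/

namespace OzaydinVolovikov

open Finsupp

section OrderedChains

variable {K : Type*} [CommRing K] {M : Type*} [AddCommGroup M] [Module K M] {Ω : Type*}

lemma eq_on_supported {f g : (Ω →₀ K) →ₗ[K] M} {s : Set Ω}
    (h : ∀ l ∈ s, f (single l 1) = g (single l 1)) {c : Ω →₀ K} (hc : c ∈ supported K K s) :
    f c = g c := by
  rw [supported_eq_span_single] at hc
  exact LinearMap.eqOn_span (Set.forall_mem_image.2 h) hc

lemma map_mem_of_mem_supported {f : (Ω →₀ K) →ₗ[K] M} {s : Set Ω} {W : Submodule K M}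
    (h : ∀ l ∈ s, f (single l 1) ∈ W) {c : Ω →₀ K} (hc : c ∈ supported K K s) : f c ∈ W := by
  rw [supported_eq_span_single] at hc
  exact (Submodule.span_le (p := W.comap f)).2 (Set.image_subset_iff.2 h) hc

variable {X Y : Type*}

variable (K) in
/-- The cone with apex `v` on a chain. Ordered chains on `X` are encoded as elements of
`List X →₀ K`: a list of length `n + 1` is an ordered `n`-simplex, and the empty list spans the
augmentation term in degree `-1`. -/
noncomputable def cone (v : X) : (List X →₀ K) →ₗ[K] (List X →₀ K) :=
  lmapDomain K K (List.cons v)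

@[simp] lemma cone_single (v : X) (l : List X) (r : K) :
    cone K v (single l r) = single (v :: l) r := by
  simp [cone]

lemma cone_mem_supported {v : X} {s t : Set (List X)} (h : ∀ l ∈ s, v :: l ∈ t)
    {c : List X →₀ K} (hc : c ∈ supported K K s) : cone K v c ∈ supported K K t :=
  map_mem_of_mem_supported (fun l hl ↦ by
    rw [cone_single]; exact single_mem_supported K _ (h l hl)) hc

variable (K) in
/-- The boundary of a single ordered simplex. -/
noncomputable def simplexBoundary : List X → (List X →₀ K)
  | [] => 0
  | v :: l => single l 1 - cone K v (simplexBoundary l)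

variable (K X) in
/-- The boundary operator of the augmented complex of ordered chains on `X`. -/
noncomputable def boundary : (List X →₀ K) →ₗ[K] (List X →₀ K) :=
  linearCombination K (simplexBoundary K)

@[simp] lemma boundary_single (l : List X) :
    boundary K X (single l 1) = simplexBoundary K l := by
  simp [boundary]

lemma boundary_cone (v : X) (c : List X →₀ K) :
    boundary K X (cone K v c) = c - cone K v (boundary K X c) := by
  have : boundary K X ∘ₗ cone K v = LinearMap.id - cone K v ∘ₗ boundary K X := by
    ext1 l; ext1; simp [simplexBoundary]
  exact LinearMap.congr_fun this c

lemma boundary_simplexBoundary (l : List X) : boundary K X (simplexBoundary K l) = 0 := by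
  induction l with
  | nil => simp [simplexBoundary]
  | cons v l ih => simp [simplexBoundary, boundary_cone, ih]

lemma boundary_boundary (c : List X →₀ K) : boundary K X (boundary K X c) = 0 := by
  have : boundary K X ∘ₗ boundary K X = 0 := by
    ext1 l; ext1; simp [boundary_simplexBoundary]
  exact LinearMap.congr_fun this c

lemma simplexBoundary_mem_supported (l : List X) :
    simplexBoundary K l ∈
      supported K K {l' : List X | l'.Sublist l ∧ l'.length + 1 = l.length} := by
  induction l with
  | nil => simp [simplexBoundary]
  | cons v l ih =>
    refine Submodule.sub_mem _ (single_mem_supported K _ (by simp)) (cone_mem_supported ?_ ih)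
    rintro l' ⟨hsub, hlen⟩
    exact ⟨hsub.cons_cons v, by simp [hlen]⟩

lemma boundary_mem_supported {s t : Set (List X)}
    (h : ∀ l ∈ s, ∀ l' : List X, l'.Sublist l → l'.length + 1 = l.length → l' ∈ t)
    {c : List X →₀ K} (hc : c ∈ supported K K s) : boundary K X c ∈ supported K K t := by
  refine map_mem_of_mem_supported (fun l hl ↦ ?_) hc
  rw [boundary_single]
  exact supported_mono (fun l' hl' ↦ h l hl l' hl'.1 hl'.2) (simplexBoundary_mem_supported l)

variable (K) in
/-- The chain map induced by a map of vertices. -/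
noncomputable def pushforward (f : X → Y) : (List X →₀ K) →ₗ[K] (List Y →₀ K) :=
  lmapDomain K K (List.map f)

@[simp] lemma pushforward_single (f : X → Y) (l : List X) (r : K) :
    pushforward K f (single l r) = single (l.map f) r := by
  simp [pushforward]

lemma pushforward_pushforward {Z : Type*} (f : X → Y) (g : Y → Z) (c : List X →₀ K) :
    pushforward K g (pushforward K f c) = pushforward K (g ∘ f) c := by
  have : pushforward K g ∘ₗ pushforward K f = pushforward K (g ∘ f) := by ext1 l; ext1; simp
  exact LinearMap.congr_fun this c

lemma pushforward_cone (f : X → Y) (v : X) (c : List X →₀ K) :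
    pushforward K f (cone K v c) = cone K (f v) (pushforward K f c) := by
  have : pushforward K f ∘ₗ cone K v = cone K (f v) ∘ₗ pushforward K f := by
    ext1 l; ext1; simp
  exact LinearMap.congr_fun this c

lemma pushforward_simplexBoundary (f : X → Y) (l : List X) :
    pushforward K f (simplexBoundary K l) = simplexBoundary K (l.map f) := by
  induction l with
  | nil => simp [simplexBoundary]
  | cons v l ih => simp [simplexBoundary, pushforward_cone, ih]

lemma boundary_pushforward (f : X → Y) (c : List X →₀ K) :
    boundary K Y (pushforward K f c) = pushforward K f (boundary K X c) := by
  have : boundary K Y ∘ₗ pushforward K f = pushforward K f ∘ₗ boundary K X := by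
    ext1 l; ext1; simp [pushforward_simplexBoundary]
  exact LinearMap.congr_fun this c

end OrderedChains

section SignedSort

variable {K : Type*} [CommRing K] {X Y : Type*} {O : Type*} [LinearOrder O]

variable (K) in
/-- Signed insertion of a vertex into a simplex whose vertices are sorted by the key `ρ`: the
sign is the parity of the transpositions performed, and the result is zero on equal keys. -/
noncomputable def signedInsert (ρ : X → O) (v : X) : List X → (List X →₀ K)
  | [] => single [v] 1
  | w :: s => if ρ v < ρ w then single (v :: w :: s) 1 else
      if ρ v = ρ w then 0 else -cone K w (signedInsert ρ v s)

variable (K) in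
/-- The linear extension of `signedInsert`. -/
noncomputable def insertion (ρ : X → O) (v : X) : (List X →₀ K) →ₗ[K] (List X →₀ K) :=
  linearCombination K (signedInsert K ρ v)

@[simp] lemma insertion_single (ρ : X → O) (v : X) (l : List X) :
    insertion K ρ v (single l 1) = signedInsert K ρ v l := by
  simp [insertion]

lemma signedInsert_of_forall_lt {ρ : X → O} {v : X} {s : List X} (h : ∀ w ∈ s, ρ v < ρ w) :
    signedInsert K ρ v s = single (v :: s) 1 := by
  cases s with
  | nil => rfl
  | cons w s => rw [signedInsert, if_pos (h w (by simp))]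

lemma insertion_cone_of_lt {ρ : X → O} {v w : X} (h : ρ v < ρ w) (c : List X →₀ K) :
    insertion K ρ v (cone K w c) = cone K v (cone K w c) := by
  have : insertion K ρ v ∘ₗ cone K w = cone K v ∘ₗ cone K w := by
    ext1 l; ext1; simp [signedInsert, h]
  exact LinearMap.congr_fun this c

lemma insertion_cone_of_eq {ρ : X → O} {v w : X} (h : ρ v = ρ w) (c : List X →₀ K) :
    insertion K ρ v (cone K w c) = 0 := by
  have : insertion K ρ v ∘ₗ cone K w = 0 := by
    ext1 l; ext1; simp [signedInsert, h]
  exact LinearMap.congr_fun this c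

lemma insertion_cone_of_gt {ρ : X → O} {v w : X} (h : ρ w < ρ v) (c : List X →₀ K) :
    insertion K ρ v (cone K w c) = -cone K w (insertion K ρ v c) := by
  have : insertion K ρ v ∘ₗ cone K w = -(cone K w ∘ₗ insertion K ρ v) := by
    ext1 l; ext1; simp [signedInsert, h.not_gt, h.ne']
  exact LinearMap.congr_fun this c

lemma boundary_signedInsert {ρ : X → O} {v : X} {s : List X}
    (hs : s.Pairwise fun x y ↦ ρ x < ρ y) (hv : ∀ w ∈ s, ρ v = ρ w → v = w) :
    boundary K X (signedInsert K ρ v s) =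
      single s 1 - insertion K ρ v (simplexBoundary K s) := by
  induction s with
  | nil => simp [signedInsert, simplexBoundary]
  | cons w s ih =>
    obtain ⟨hw, hs⟩ := List.pairwise_cons.1 hs
    rcases lt_trichotomy (ρ v) (ρ w) with h | h | h
    · rw [signedInsert, if_pos h, boundary_single, simplexBoundary, simplexBoundary, map_sub,
        map_sub, insertion_single, signedInsert_of_forall_lt fun x hx ↦ h.trans (hw x hx),
        insertion_cone_of_lt h, cone_single]
    · obtain rfl : v = w := hv w (by simp) h
      simp [signedInsert, simplexBoundary, signedInsert_of_forall_lt hw, insertion_cone_of_eq]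
    · rw [signedInsert, if_neg h.not_gt, if_neg h.ne', map_neg, boundary_cone,
        ih hs fun x hx ↦ hv x (by simp [hx]), simplexBoundary, map_sub, map_sub,
        insertion_single, insertion_cone_of_gt h, cone_single]
      abel

lemma signedInsert_mem_supported {ρ : X → O} (v : X) {s : List X}
    (hs : s.Pairwise fun x y ↦ ρ x < ρ y) :
    signedInsert K ρ v s ∈
      supported K K {t | t.Pairwise (fun x y ↦ ρ x < ρ y) ∧ t.Perm (v :: s)} := by
  induction s with
  | nil => exact single_mem_supported K _ (by simp)
  | cons w s ih =>
    obtain ⟨hw, hs'⟩ := List.pairwise_cons.1 hs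
    rw [signedInsert]
    split_ifs with hlt heq
    · refine single_mem_supported K _ ⟨List.pairwise_cons.2 ⟨?_, hs⟩, .refl _⟩
      exact List.forall_mem_cons.2 ⟨hlt, fun x hx ↦ hlt.trans (hw x hx)⟩
    · exact Submodule.zero_mem _
    · refine Submodule.neg_mem _ (cone_mem_supported ?_ (ih hs'))
      rintro t ⟨ht, hperm⟩
      refine ⟨List.pairwise_cons.2 ⟨fun x hx ↦ ?_, ht⟩, (hperm.cons w).trans (.swap v w s)⟩
      rcases List.mem_cons.1 (hperm.mem_iff.1 hx) with rfl | hx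
      · exact lt_of_le_of_ne (not_lt.1 hlt) (Ne.symm heq)
      · exact hw x hx

lemma pushforward_signedInsert (ρ : Y → O) (f : X → Y) (v : X) (s : List X) :
    pushforward K f (signedInsert K (ρ ∘ f) v s) = signedInsert K ρ (f v) (s.map f) := by
  induction s with
  | nil => simp [signedInsert]
  | cons w s ih =>
    simp only [signedInsert, List.map_cons, Function.comp_apply]
    split_ifs <;> simp [pushforward_cone, ih]

lemma pushforward_insertion (ρ : Y → O) (f : X → Y) (v : X) (c : List X →₀ K) :
    pushforward K f (insertion K (ρ ∘ f) v c) = insertion K ρ (f v) (pushforward K f c) := by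
  have : pushforward K f ∘ₗ insertion K (ρ ∘ f) v = insertion K ρ (f v) ∘ₗ pushforward K f := by
    ext1 l; ext1; simp [pushforward_signedInsert]
  exact LinearMap.congr_fun this c

variable (K) in
/-- The simplex obtained by sorting the vertices by the key `ρ`, with the sign of the sorting
permutation; it is zero if a key is repeated. -/
noncomputable def signedSort (ρ : X → O) : List X → (List X →₀ K)
  | [] => single [] 1
  | v :: l => insertion K ρ v (signedSort ρ l)

variable (K) in
/-- The linear extension of `signedSort`. -/
noncomputable def sorting (ρ : X → O) : (List X →₀ K) →ₗ[K] (List X →₀ K) :=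
  linearCombination K (signedSort K ρ)

@[simp] lemma sorting_single (ρ : X → O) (l : List X) :
    sorting K ρ (single l 1) = signedSort K ρ l := by
  simp [sorting]

lemma sorting_cone (ρ : X → O) (v : X) (c : List X →₀ K) :
    sorting K ρ (cone K v c) = insertion K ρ v (sorting K ρ c) := by
  have : sorting K ρ ∘ₗ cone K v = insertion K ρ v ∘ₗ sorting K ρ := by
    ext1 l; ext1; simp [signedSort]
  exact LinearMap.congr_fun this c

lemma signedSort_mem_supported (ρ : X → O) (l : List X) :
    signedSort K ρ l ∈
      supported K K {s | s.Pairwise (fun x y ↦ ρ x < ρ y) ∧ s.Perm l} := by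
  induction l with
  | nil => exact single_mem_supported K _ (by simp)
  | cons v l ih =>
    refine map_mem_of_mem_supported (fun s hs ↦ ?_) ih
    rw [insertion_single]
    refine supported_mono ?_ (signedInsert_mem_supported v hs.1)
    exact fun t ht ↦ ⟨ht.1, ht.2.trans (hs.2.cons v)⟩

lemma signedSort_eq_zero (ρ : X → O) {l : List X} (hl : ¬(l.map ρ).Nodup) :
    signedSort K ρ l = 0 := by
  have hempty : {s : List X | s.Pairwise (fun x y ↦ ρ x < ρ y) ∧ s.Perm l} = ∅ := by
    refine Set.eq_empty_of_forall_notMem fun s hs ↦ hl ?_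
    rw [← (hs.2.map ρ).nodup_iff]
    exact List.pairwise_map.2 (hs.1.imp ne_of_lt)
  simpa [hempty] using signedSort_mem_supported (K := K) ρ l

lemma boundary_signedSort {ρ : X → O} {l : List X} (hl : Set.InjOn ρ {x | x ∈ l}) :
    boundary K X (signedSort K ρ l) = sorting K ρ (simplexBoundary K l) := by
  induction l with
  | nil => simp [signedSort, simplexBoundary]
  | cons v l ih =>
    have hinsert : boundary K X (insertion K ρ v (signedSort K ρ l)) =
        signedSort K ρ l - insertion K ρ v (boundary K X (signedSort K ρ l)) := by
      refine eq_on_supported (f := boundary K X ∘ₗ insertion K ρ v)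
        (g := LinearMap.id - insertion K ρ v ∘ₗ boundary K X) (fun s hs ↦ ?_)
        (signedSort_mem_supported ρ l)
      simpa using boundary_signedInsert hs.1 fun w hw ↦
        hl List.mem_cons_self (List.mem_cons_of_mem v (hs.2.mem_iff.1 hw))
    rw [signedSort, hinsert, ih (hl.mono fun x hx ↦ by simp_all), simplexBoundary, map_sub,
      sorting_single, sorting_cone]

lemma pushforward_signedSort (ρ : Y → O) (f : X → Y) (l : List X) :
    pushforward K f (signedSort K (ρ ∘ f) l) = signedSort K ρ (l.map f) := by
  induction l with
  | nil => simp [signedSort]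
  | cons v l ih => rw [signedSort, pushforward_insertion, ih, List.map_cons, signedSort]

lemma pushforward_sorting (ρ : Y → O) (f : X → Y) (c : List X →₀ K) :
    pushforward K f (sorting K (ρ ∘ f) c) = sorting K ρ (pushforward K f c) := by
  have : pushforward K f ∘ₗ sorting K (ρ ∘ f) = sorting K ρ ∘ₗ pushforward K f := by
    ext1 l; ext1; simp [pushforward_signedSort]
  exact LinearMap.congr_fun this c

variable (K) in
/-- The prism on a simplex between its vertices and their sorted images under `π`. -/
noncomputable def simplexPrism (ρ : X → O) (π : X → X) : List X → (List X →₀ K)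
  | [] => 0
  | v :: l => -cone K v (simplexPrism ρ π l) - cone K v (signedSort K ρ ((v :: l).map π))

variable (K) in
/-- The chain homotopy between the identity and `sorting K ρ ∘ₗ pushforward K π`. -/
noncomputable def prism (ρ : X → O) (π : X → X) : (List X →₀ K) →ₗ[K] (List X →₀ K) :=
  linearCombination K (simplexPrism K ρ π)

@[simp] lemma prism_single (ρ : X → O) (π : X → X) (l : List X) :
    prism K ρ π (single l 1) = simplexPrism K ρ π l := by
  simp [prism]

lemma prism_cone (ρ : X → O) (π : X → X) (v : X) (c : List X →₀ K) :
    prism K ρ π (cone K v c) = -cone K v (prism K ρ π c) -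
      cone K v (insertion K ρ (π v) (sorting K ρ (pushforward K π c))) := by
  have : prism K ρ π ∘ₗ cone K v = -(cone K v ∘ₗ prism K ρ π) -
      cone K v ∘ₗ insertion K ρ (π v) ∘ₗ sorting K ρ ∘ₗ pushforward K π := by
    ext1 l; ext1; simp [simplexPrism, signedSort]
  exact LinearMap.congr_fun this c

lemma boundary_simplexPrism {ρ : X → O} {π : X → X} {l : List X}
    (hl : Set.InjOn ρ {x | x ∈ l.map π}) :
    boundary K X (simplexPrism K ρ π l) + prism K ρ π (simplexBoundary K l) =
      single l 1 - signedSort K ρ (l.map π) := by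
  induction l with
  | nil => simp [signedSort, simplexBoundary, simplexPrism]
  | cons v l ih =>
    have hsort := boundary_signedSort (K := K) hl
    simp only [List.map_cons, simplexBoundary, map_sub, sorting_single, sorting_cone,
      signedSort] at hsort
    have ih := congrArg (cone K v) (ih (hl.mono fun x hx ↦ by
      simp only [Set.mem_ofPred_eq, List.map_cons, List.mem_cons] at hx ⊢; exact Or.inr hx))
    simp only [map_add, map_sub, cone_single] at ih
    simp only [simplexPrism, simplexBoundary, List.map_cons, signedSort, map_sub, map_neg,
      boundary_cone, hsort, prism_single, prism_cone, pushforward_simplexBoundary]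
    rw [← sub_eq_zero] at ih ⊢
    rw [← ih]
    abel

lemma simplexPrism_mem_supported (ρ : X → O) (π : X → X) (l : List X) :
    simplexPrism K ρ π l ∈
      supported K K {t | t.length = l.length + 1 ∧ t ⊆ l ++ l.map π} := by
  induction l with
  | nil => exact Submodule.zero_mem _
  | cons v l ih =>
    refine Submodule.sub_mem _ (Submodule.neg_mem _ (cone_mem_supported ?_ ih))
      (cone_mem_supported ?_ (signedSort_mem_supported ρ _))
    · rintro t ⟨hlen, hsub⟩
      refine ⟨by simp [hlen], List.cons_subset.2 ⟨by simp, fun x hx ↦ ?_⟩⟩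
      have := hsub hx
      simp only [List.mem_append, List.mem_cons, List.map_cons] at this ⊢
      tauto
    · rintro t ⟨-, hperm⟩
      refine ⟨by simp [hperm.length_eq], List.cons_subset.2 ⟨by simp, fun x hx ↦ ?_⟩⟩
      exact List.mem_append_right _ (hperm.mem_iff.1 hx)

end SignedSort

section PermutationModules

variable {K : Type*} [CommRing K] {Γ : Type*} [Group Γ]
  {Ω Ω' : Type*} [MulAction Γ Ω] [MulAction Γ Ω']

variable (K Γ Ω) in
/-- The permutation representation of `Γ` on the free module on a `Γ`-set. -/
noncomputable def permutationRep : Representation K Γ (Ω →₀ K) where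
  toFun g := lmapDomain K K (g • ·)
  map_one' := by ext1 z; ext1; simp
  map_mul' g h := by ext1 z; ext1; simp [mul_smul]

@[simp] lemma permutationRep_single (g : Γ) (z : Ω) (r : K) :
    permutationRep K Γ Ω g (single z r) = single (g • z) r := by
  simp [permutationRep]

lemma permutationRep_apply (g : Γ) (c : Ω →₀ K) (z : Ω) :
    permutationRep K Γ Ω g c z = c (g⁻¹ • z) :=
  mapDomain_equiv_apply (f := MulAction.toPerm g) c z

variable (K Ω) in
/-- The action of the group algebra on the free module on a `Γ`-set. -/
noncomputable abbrev chainAction : MonoidAlgebra K Γ →ₐ[K] Module.End K (Ω →₀ K) :=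
  (permutationRep K Γ Ω).asAlgebraHom

lemma map_chainAction {f : (Ω →₀ K) →ₗ[K] (Ω' →₀ K)}
    (hf : ∀ (g : Γ) c, f (permutationRep K Γ Ω g c) = permutationRep K Γ Ω' g (f c))
    (b : MonoidAlgebra K Γ) (c : Ω →₀ K) :
    f (chainAction K Ω b c) = chainAction K Ω' b (f c) := by
  induction b using MonoidAlgebra.induction_on with
  | of g => simp [hf]
  | add x y hx hy => simp [hx, hy]
  | smul r x hx => simp [hx]

lemma chainAction_mem_supported {s : Set Ω} (hs : ∀ (g : Γ), ∀ z ∈ s, g • z ∈ s)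
    (b : MonoidAlgebra K Γ) {c : Ω →₀ K} (hc : c ∈ supported K K s) :
    chainAction K Ω b c ∈ supported K K s := by
  induction b using MonoidAlgebra.induction_on with
  | of g =>
    rw [Representation.asAlgebraHom_of]
    refine map_mem_of_mem_supported (fun z hz ↦ ?_) hc
    simpa using single_mem_supported K (1 : K) (hs g z hz)
  | add x y hx hy => simpa using Submodule.add_mem _ hx hy
  | smul r x hx => simpa using Submodule.smul_mem _ r hx

lemma chainAction_permutationRep_comm {G : Type*} [CommGroup G] [MulAction G Ω] (g : G)
    (b : MonoidAlgebra K G) (v : Ω →₀ K) :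
    chainAction K Ω b (permutationRep K G Ω g v) =
      permutationRep K G Ω g (chainAction K Ω b v) := by
  refine (map_chainAction (fun h v ↦ ?_) b v).symm
  rw [← Module.End.mul_apply, ← Module.End.mul_apply, ← map_mul, ← map_mul, mul_comm]

end PermutationModules

section ListAction

variable {K : Type*} [CommRing K] {Γ : Type*} [Group Γ] {X : Type*} [MulAction Γ X]

/-- The vertexwise action on ordered simplices. -/
instance : MulAction Γ (List X) where
  smul g := List.map (g • ·)
  one_smul l := by change l.map _ = l; simp
  mul_smul g h l := by change l.map _ = (l.map _).map _; simp [mul_smul]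

lemma smul_list_eq_map (g : Γ) (l : List X) : g • l = l.map (g • ·) := rfl

@[simp] lemma length_smul (g : Γ) (l : List X) : (g • l).length = l.length :=
  List.length_map _

lemma boundary_chainAction (b : MonoidAlgebra K Γ) (c : List X →₀ K) :
    boundary K X (chainAction K (List X) b c) = chainAction K (List X) b (boundary K X c) :=
  map_chainAction (fun g ↦ boundary_pushforward (g • ·)) b c

lemma pushforward_chainAction {Y : Type*} [MulAction Γ Y] {f : X → Y}
    (hf : ∀ (g : Γ) x, f (g • x) = g • f x) (b : MonoidAlgebra K Γ) (c : List X →₀ K) :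
    pushforward K f (chainAction K (List X) b c) =
      chainAction K (List Y) b (pushforward K f c) := by
  refine map_chainAction (fun g c ↦ ?_) b c
  induction c using Finsupp.induction_linear with
  | zero => simp
  | add c d hc hd => simp only [map_add, hc, hd]
  | single l r => simp [smul_list_eq_map, Function.comp_def, hf]

lemma sorting_chainAction {O : Type*} [LinearOrder O] {ρ : X → O}
    (hρ : ∀ (g : Γ) x, ρ (g • x) = ρ x) (b : MonoidAlgebra K Γ) (c : List X →₀ K) :
    sorting K ρ (chainAction K (List X) b c) = chainAction K (List X) b (sorting K ρ c) := by
  refine map_chainAction (fun g c ↦ ?_) b c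
  have h := pushforward_sorting ρ (g • · : X → X) c
  rw [show ρ ∘ (g • ·) = ρ from funext (hρ g)] at h
  exact h.symm

end ListAction

section WeylRelation

variable {K : Type*} [Field K] {V : Type*} [AddCommGroup V] [Module K V] {x D : Module.End K V}

lemma weyl_pow {R : Type*} [Ring R] {x D : R} (h : D * x = x * D + 1) (n : ℕ) :
    D * x ^ (n + 1) = x ^ (n + 1) * D + (n + 1 : ℕ) * x ^ n := by
  induction n with
  | zero => simp [h]
  | succ n ih =>
    rw [pow_succ x (n + 1), ← mul_assoc, ih, add_mul, mul_assoc, h, mul_assoc _ _ x, ← pow_succ,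
      Nat.cast_succ (n + 1)]
    noncomm_ring

lemma ker_pow_le_range (a : ℕ) [CharP K a] (h : D * x = x * D + 1) {n : ℕ} (hn : n < a) :
    LinearMap.ker (x ^ n) ≤ LinearMap.range x := by
  induction n with
  | zero =>
    intro v hv
    obtain rfl : v = 0 := by simpa using hv
    exact Submodule.zero_mem _
  | succ n ih =>
    intro v hv
    have hne : ((n + 1 : ℕ) : K) ≠ 0 := by
      rw [Ne, CharP.cast_eq_zero_iff K a]
      exact Nat.not_dvd_of_pos_of_lt n.succ_pos hn
    have hDv : D ((x ^ (n + 1)) v) = (x ^ (n + 1)) (D v) + ((n + 1 : ℕ) : K) • (x ^ n) v := by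
      rw [Nat.cast_smul_eq_nsmul]
      simpa only [← nsmul_eq_mul, LinearMap.add_apply, LinearMap.smul_apply,
        Module.End.mul_apply] using LinearMap.congr_fun (weyl_pow h n) v
    have hker : x (D v) + ((n + 1 : ℕ) : K) • v ∈ LinearMap.ker (x ^ n) := by
      rw [LinearMap.mem_ker] at hv ⊢
      rw [hv, map_zero, pow_succ] at hDv
      rw [map_add, map_smul, hDv, Module.End.mul_apply]
    have hmem : ((n + 1 : ℕ) : K) • v ∈ LinearMap.range x := by
      simpa using Submodule.sub_mem _ (ih (by omega) hker) (LinearMap.mem_range_self x (D v))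
    exact (Submodule.smul_mem_iff _ hne).1 hmem

-- The Weyl relation makes `x` act as a truncated derivative does: `V` is free over `K[x]/(x^a)`.
lemma ker_pow_le_range_pow (a : ℕ) [CharP K a] (h : D * x = x * D + 1) {p d : ℕ}
    (hpd : p + d = a) : LinearMap.ker (x ^ p) ≤ LinearMap.range (x ^ d) := by
  induction d generalizing p with
  | zero => simp [Module.End.one_eq_id]
  | succ d ih =>
    intro v hv
    obtain ⟨w, rfl⟩ := ker_pow_le_range a h (by omega) hv
    obtain ⟨w', rfl⟩ := ih (p := p + 1) (by omega)
      (show w ∈ _ by rwa [LinearMap.mem_ker, pow_succ, Module.End.mul_apply])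
    exact ⟨w', by rw [pow_succ', Module.End.mul_apply]⟩

end WeylRelation

section ElementaryAbelian

variable {K : Type*} [Field K] {a : ℕ} {ι : Type*}

variable (a ι) in
/-- The group `(ℤ/a)^ι`, written multiplicatively. -/
abbrev ElementaryAbelian : Type _ := Multiplicative (ι → ZMod a)

lemma ElementaryAbelian.pow_eq_one (g : ElementaryAbelian a ι) : g ^ a = 1 := by
  apply Multiplicative.toAdd.injective
  ext i
  simp

variable [Fintype ι] [DecidableEq ι]

variable (a) in
/-- The standard generators of `(ℤ/a)^ι`. -/
def generator (i : ι) : ElementaryAbelian a ι := .ofAdd (Pi.single i 1)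

variable (a) in
/-- The element `∑ i, α i (g_i - 1)` of the group algebra of `(ℤ/a)^ι`. For `α` linearly
independent over `ℤ/a` it restricts to a generator of a shifted cyclic subgroup acting freely on
every permutation module without trivial orbits. -/
noncomputable def genericElement (α : ι → K) : MonoidAlgebra K (ElementaryAbelian a ι) :=
  ∑ i, α i • (MonoidAlgebra.of K _ (generator a i) - 1)

/-- The element `∑ i, α i χ(g_i) g_i` attached to a character `χ`: the commutator of
`genericElement a α` with multiplication by a function that `χ` translates. -/
noncomputable def twistedElement [Algebra (ZMod a) K] (α : ι → K)
    (χ : (ι → ZMod a) →ₗ[ZMod a] ZMod a) : MonoidAlgebra K (ElementaryAbelian a ι) :=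
  ∑ i, (α i * algebraMap (ZMod a) K (χ (Pi.single i 1))) • MonoidAlgebra.of K _ (generator a i)

lemma charP_groupAlgebra (K : Type*) [Field K] [CharP K a] (Γ : Type*) [Group Γ] :
    CharP (MonoidAlgebra K Γ) a :=
  charP_of_injective_algebraMap (RingHom.injective (algebraMap K _)) a

variable [Fact a.Prime]

lemma genericElement_pow [CharP K a] (α : ι → K) : genericElement a α ^ a = 0 := by
  have := charP_groupAlgebra (a := a) K (ElementaryAbelian a ι)
  rw [genericElement, sum_pow_char a]
  refine Finset.sum_eq_zero fun i _ ↦ ?_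
  rw [smul_pow, sub_pow_char, ← map_pow, ElementaryAbelian.pow_eq_one, map_one, one_pow, sub_self,
    smul_zero]

variable [CharP K a] [Algebra (ZMod a) K]

lemma twistedElement_pow (α : ι → K) (χ : (ι → ZMod a) →ₗ[ZMod a] ZMod a) :
    twistedElement α χ ^ a = algebraMap K (MonoidAlgebra K (ElementaryAbelian a ι))
      ((∑ i, α i * algebraMap (ZMod a) K (χ (Pi.single i 1))) ^ a) := by
  have := charP_groupAlgebra (a := a) K (ElementaryAbelian a ι)
  rw [twistedElement, sum_pow_char a, sum_pow_char a, map_sum]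
  refine Finset.sum_congr rfl fun i _ ↦ ?_
  rw [smul_pow, ← map_pow (MonoidAlgebra.of K (ElementaryAbelian a ι)),
    ElementaryAbelian.pow_eq_one, map_one]
  exact (Algebra.algebraMap_eq_smul_one _).symm

lemma isUnit_twistedElement {α : ι → K} (hα : LinearIndependent (ZMod a) α)
    {χ : (ι → ZMod a) →ₗ[ZMod a] ZMod a} (hχ : χ ≠ 0) : IsUnit (twistedElement α χ) := by
  have hsum : ∑ i, α i * algebraMap (ZMod a) K (χ (Pi.single i 1)) ≠ 0 := by
    contrapose! hχ
    refine LinearMap.pi_ext' fun i ↦ LinearMap.ext_ring ?_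
    refine Fintype.linearIndependent_iff.1 hα (fun i ↦ χ (Pi.single i 1)) ?_ i
    simpa only [Algebra.smul_def, mul_comm] using hχ
  rw [← isUnit_pow_iff (Fact.out : a.Prime).ne_zero, twistedElement_pow]
  exact (IsUnit.mk0 _ (pow_ne_zero _ hsum)).map _

end ElementaryAbelian

section FreeAction

variable {K : Type*} [Field K] {a : ℕ} {ι : Type*} {Ω : Type*} [MulAction (ElementaryAbelian a ι) Ω]

-- Each stabilizer is a proper subspace of `(ℤ/a)^ι`, so some nonzero character `χ` kills it, and
-- `c (g • z₀) = χ g` is then well defined on the orbit of `z₀`.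
lemma exists_character_and_cocycle [Fact a.Prime]
    (hΩ : ∀ z : Ω, ∃ g : ElementaryAbelian a ι, g • z ≠ z) :
    ∃ (χ : Ω → (ι → ZMod a) →ₗ[ZMod a] ZMod a) (c : Ω → ZMod a), (∀ z, χ z ≠ 0) ∧
      (∀ (g : ElementaryAbelian a ι) z, χ (g • z) = χ z) ∧
      ∀ (g : ElementaryAbelian a ι) z, c (g • z) = c z + χ z g.toAdd := by
  have hχ (z : Ω) : ∃ χ : (ι → ZMod a) →ₗ[ZMod a] ZMod a, χ ≠ 0 ∧
      ∀ g ∈ MulAction.stabilizer (ElementaryAbelian a ι) z, χ g.toAdd = 0 := by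
    let W := AddSubgroup.toZModSubmodule a
      (MulAction.stabilizer (ElementaryAbelian a ι) z).toAddSubgroup'
    have hW : W < ⊤ := lt_top_iff_ne_top.2 fun htop ↦ by
      obtain ⟨g, hg⟩ := hΩ z
      exact hg (htop ▸ Submodule.mem_top : g.toAdd ∈ W)
    obtain ⟨χ, hχ, hker⟩ := Submodule.exists_le_ker_of_lt_top W hW
    exact ⟨χ, hχ, fun g hg ↦ hker hg⟩
  choose χ hχ_ne hχ_stab using hχ
  let rep (z : Ω) : Ω :=
    (Quotient.mk (MulAction.orbitRel (ElementaryAbelian a ι) Ω) z).out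
  have rep_smul (g : ElementaryAbelian a ι) z : rep (g • z) = rep z :=
    congrArg Quotient.out (Quotient.sound ⟨g, rfl⟩)
  have exists_smul_rep (z : Ω) : ∃ g : ElementaryAbelian a ι, g • rep z = z :=
    (MulAction.orbitRel (ElementaryAbelian a ι) Ω).symm (Quotient.mk_out z)
  choose γ hγ using exists_smul_rep
  refine ⟨fun z ↦ χ (rep z), fun z ↦ χ (rep z) (γ z).toAdd, fun z ↦ hχ_ne _,
    fun g z ↦ congrArg χ (rep_smul g z), fun g z ↦ ?_⟩
  have hstab : (γ z * g)⁻¹ * γ (g • z) ∈ MulAction.stabilizer _ (rep z) := by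
    have := hγ (g • z)
    rw [rep_smul] at this
    rw [MulAction.mem_stabilizer_iff, mul_smul, inv_smul_eq_iff, this, mul_comm, mul_smul, hγ]
  have := hχ_stab _ _ hstab
  simp only [toAdd_mul, toAdd_inv, map_add, map_neg] at this
  simp only [rep_smul]
  exact (neg_add_eq_zero.1 this).symm

variable [Fintype ι] [DecidableEq ι]

lemma chainAction_genericElement (α : ι → K) (v : Ω →₀ K) :
    chainAction K Ω (genericElement a α) v =
      ∑ i, α i • (permutationRep K _ Ω (generator a i) v - v) := by
  simp [genericElement]

lemma chainAction_twistedElement [Algebra (ZMod a) K] (α : ι → K)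
    (χ : (ι → ZMod a) →ₗ[ZMod a] ZMod a) (v : Ω →₀ K) : chainAction K Ω (twistedElement α χ) v =
      ∑ i, (α i * algebraMap (ZMod a) K (χ (Pi.single i 1))) •
        permutationRep K _ Ω (generator a i) v := by
  simp [twistedElement]

lemma chainAction_genericElement_apply_fixed (α : ι → K) (v : Ω →₀ K) {z : Ω}
    (hz : ∀ g : ElementaryAbelian a ι, g • z = z) :
    chainAction K Ω (genericElement a α) v z = 0 := by
  simp [chainAction_genericElement, permutationRep_apply, hz]

variable [Fact a.Prime] [CharP K a] [Algebra (ZMod a) K]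

lemma exists_weyl_operator (hΩ : ∀ z : Ω, ∃ g : ElementaryAbelian a ι, g • z ≠ z) {α : ι → K}
    (hα : LinearIndependent (ZMod a) α) : ∃ D : Module.End K (Ω →₀ K),
      D * chainAction K Ω (genericElement a α) =
        chainAction K Ω (genericElement a α) * D + 1 := by
  obtain ⟨χ, c, hχ_ne, hχ_smul, hc⟩ := exists_character_and_cocycle hΩ
  let D : Module.End K (Ω →₀ K) := linearCombination K fun z ↦
    algebraMap (ZMod a) K (c z) • chainAction K Ω (Ring.inverse (twistedElement α (χ z)))
      (single z 1)
  have hD_smul (g : ElementaryAbelian a ι) (z : Ω) :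
      D (permutationRep K _ Ω g (single z 1)) = permutationRep K _ Ω g (D (single z 1)) +
        chainAction K Ω (Ring.inverse (twistedElement α (χ z)))
          (algebraMap (ZMod a) K (χ z g.toAdd) • permutationRep K _ Ω g (single z 1)) := by
    simp only [D, permutationRep_single, linearCombination_single, one_smul, hχ_smul, hc, map_add,
      add_smul, map_smul]
    rw [← permutationRep_single g z, chainAction_permutationRep_comm]
  refine ⟨D, ?_⟩
  ext1 z
  ext1
  have hunit := Ring.inverse_mul_cancel _ (isUnit_twistedElement hα (hχ_ne z))
  calc D (chainAction K Ω (genericElement a α) (single z 1))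
    _ = chainAction K Ω (genericElement a α) (D (single z 1)) +
        chainAction K Ω (Ring.inverse (twistedElement α (χ z)))
          (chainAction K Ω (twistedElement α (χ z)) (single z 1)) := by
      simp only [chainAction_genericElement, chainAction_twistedElement, map_sum, map_smul,
        map_sub, hD_smul, ← Finset.sum_add_distrib]
      refine Finset.sum_congr rfl fun i _ ↦ ?_
      simp only [mul_smul, smul_sub, smul_add, generator, toAdd_ofAdd]
      abel
    _ = chainAction K Ω (genericElement a α) (D (single z 1)) + single z 1 := by
      rw [← Module.End.mul_apply (chainAction K Ω (Ring.inverse _)), ← map_mul, hunit, map_one,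
        Module.End.one_apply]

lemma exists_genericElement_pow_eq {s : SubMulAction (ElementaryAbelian a ι) Ω}
    (hs : ∀ z ∈ s, ∃ g : ElementaryAbelian a ι, g • z ≠ z) {α : ι → K}
    (hα : LinearIndependent (ZMod a) α) {p d : ℕ} (hpd : p + d = a) {v : Ω →₀ K}
    (hv : v ∈ supported K K (s : Set Ω)) (h : chainAction K Ω (genericElement a α ^ p) v = 0) :
    ∃ w ∈ supported K K (s : Set Ω), v = chainAction K Ω (genericElement a α ^ d) w := by
  have hrange : supported K K (s : Set Ω) =
      LinearMap.range (lmapDomain K K (Subtype.val : s → Ω)) := by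
    simpa using (lmapDomain_supported K K (Subtype.val : s → Ω) Set.univ).symm
  have hmap (b : MonoidAlgebra K (ElementaryAbelian a ι)) (v : s →₀ K) :
      lmapDomain K K Subtype.val (chainAction K s b v) =
        chainAction K Ω b (lmapDomain K K Subtype.val v) := by
    refine map_chainAction (fun g v ↦ ?_) b v
    induction v using Finsupp.induction_linear with
    | zero => simp
    | add v w hv hw => simp only [map_add, hv, hw]
    | single z r => simp
  obtain ⟨D, hD⟩ := exists_weyl_operator (Ω := s) (fun z ↦ by
    obtain ⟨g, hg⟩ := hs z z.2
    exact ⟨g, fun h ↦ hg (congrArg Subtype.val h)⟩) hα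
  obtain ⟨v, rfl⟩ := hrange ▸ hv
  rw [← hmap] at h
  have hker : v ∈ LinearMap.ker (chainAction K s (genericElement a α) ^ p) := by
    rw [← map_pow]
    exact mapDomain_injective Subtype.val_injective (by simpa using h)
  obtain ⟨w, rfl⟩ := ker_pow_le_range_pow a hD hpd hker
  exact ⟨lmapDomain K K Subtype.val w, hrange ▸ LinearMap.mem_range_self _ w,
    by rw [← hmap, map_pow]⟩

end FreeAction

section Towers

/-- The exponents `1, a - 1, 1, a - 1, …` in the periodic free resolution
`⋯ → R → R → R → K` of `K` over `R = K[x]/(x ^ a)`. -/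
def periodicExponent (a j : ℕ) : ℕ := if Even j then 1 else a - 1

lemma periodicExponent_add_succ {a : ℕ} (ha : 0 < a) (j : ℕ) :
    periodicExponent a j + periodicExponent a (j + 1) = a := by
  by_cases hj : Even j <;> simp only [periodicExponent, Nat.even_add_one, hj, not_true,
    not_false_iff, if_true, if_false] <;> omega

lemma periodicExponent_add_two (a j : ℕ) : periodicExponent a (j + 2) = periodicExponent a j := by
  simp [periodicExponent, Nat.even_add]

variable {K : Type*} [Field K] {a : ℕ} {ι : Type*} {X : Type*}
  [MulAction (ElementaryAbelian a ι) X]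

variable (a ι X) in
/-- The ordered simplices with `n` vertices. -/
def simplices (n : ℕ) : SubMulAction (ElementaryAbelian a ι) (List X) where
  carrier := {l | l.length = n}
  smul_mem' g l hl := (length_smul g l).trans hl

lemma mem_simplices {n : ℕ} {l : List X} : l ∈ simplices a ι X n ↔ l.length = n := Iff.rfl

lemma exists_smul_ne_of_mem_simplices (hX : ∀ x : X, ∃ g : ElementaryAbelian a ι, g • x ≠ x)
    {n : ℕ} : ∀ l ∈ simplices a ι X (n + 1), ∃ g : ElementaryAbelian a ι, g • l ≠ l
  | v :: l, _ => by
    obtain ⟨g, hg⟩ := hX v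
    exact ⟨g, fun h ↦ hg (List.cons_eq_cons.1 h).1⟩

variable [Fintype ι] [DecidableEq ι]

variable (a) in
/-- The images `e 0, …, e N` of the generators under an augmented `K[x]/(x ^ a)`-linear chain map
from the periodic resolution of `K`, truncated at degree `N`, to the ordered chains of `X`, where
`x` acts through `genericElement a α` and `e j` is supported on `S j`. -/
structure IsTower (α : ι → K) (S : ℕ → Set (List X)) (N : ℕ) (e : ℕ → (List X →₀ K)) : Prop where
  mem_supported : ∀ j ≤ N, e j ∈ supported K K (S j)
  boundary_zero : boundary K X (e 0) = single [] 1
  boundary_succ : ∀ j < N, boundary K X (e (j + 1)) =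
    chainAction K (List X) (genericElement a α ^ periodicExponent a j) (e j)

variable {α : ι → K} {S : ℕ → Set (List X)} {N : ℕ} {e : ℕ → (List X →₀ K)}

lemma IsTower.mono {T : ℕ → Set (List X)} (he : IsTower a α S N e) (h : ∀ j, S j ⊆ T j) :
    IsTower a α T N e :=
  ⟨fun j hj ↦ supported_mono (h j) (he.mem_supported j hj), he.boundary_zero, he.boundary_succ⟩

lemma IsTower.succ (he : IsTower a α S N e) {w : List X →₀ K}
    (hw : w ∈ supported K K (S (N + 1))) (hbw : boundary K X w =
      chainAction K (List X) (genericElement a α ^ periodicExponent a N) (e N)) :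
    IsTower a α S (N + 1) (Function.update e (N + 1) w) where
  mem_supported j hj := by
    rcases hj.lt_or_eq with hj | rfl
    · simpa [hj.ne] using he.mem_supported j (by omega)
    · simpa
  boundary_zero := by simpa using he.boundary_zero
  boundary_succ j hj := by
    rcases (Nat.lt_succ_iff.1 hj).lt_or_eq with hj | rfl
    · simpa [hj.ne, (hj.trans N.lt_succ_self).ne] using he.boundary_succ j hj
    · simpa using hbw

lemma IsTower.map {Y : Type*} [MulAction (ElementaryAbelian a ι) Y] (he : IsTower a α S N e)
    {f : (List X →₀ K) →ₗ[K] (List Y →₀ K)} {T : ℕ → Set (List Y)}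
    (hf_mem : ∀ j ≤ N, ∀ l ∈ S j, f (single l 1) ∈ supported K K (T j))
    (hf_boundary : ∀ j ≤ N, ∀ l ∈ S j, boundary K Y (f (single l 1)) = f (simplexBoundary K l))
    (hf_act : ∀ (b : MonoidAlgebra K (ElementaryAbelian a ι)) c,
      f (chainAction K (List X) b c) = chainAction K (List Y) b (f c))
    (hf_nil : f (single [] 1) = single [] 1) : IsTower a α T N fun j ↦ f (e j) := by
  have hboundary (j) (hj : j ≤ N) : boundary K Y (f (e j)) = f (boundary K X (e j)) :=
    eq_on_supported (f := boundary K Y ∘ₗ f) (g := f ∘ₗ boundary K X)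
      (fun l hl ↦ by simpa using hf_boundary j hj l hl) (he.mem_supported j hj)
  refine ⟨fun j hj ↦ map_mem_of_mem_supported (hf_mem j hj) (he.mem_supported j hj), ?_,
    fun j hj ↦ ?_⟩
  · rw [hboundary 0 N.zero_le, he.boundary_zero, hf_nil]
  · rw [hboundary (j + 1) hj, he.boundary_succ j hj, hf_act]

lemma IsTower.sort {O : Type*} [LinearOrder O] {ρ : X → O} {π : X → X}
    (he : IsTower a α S N e) (hρ : ∀ (g : ElementaryAbelian a ι) x, ρ (g • x) = ρ x)
    (hπ : ∀ (g : ElementaryAbelian a ι) x, π (g • x) = g • π x)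
    (hS : ∀ j, ∀ l ∈ S j, l.length = j + 1)
    (hinj : ∀ j, ∀ l ∈ S j, Set.InjOn ρ {x | x ∈ l.map π}) :
    IsTower a α (fun j ↦ simplices a ι X (j + 1)) N
      fun j ↦ sorting K ρ (pushforward K π (e j)) := by
  refine he.map (f := sorting K ρ ∘ₗ pushforward K π) (fun j _ l hl ↦ ?_)
    (fun j _ l hl ↦ ?_) (fun b c ↦ ?_) (by simp [signedSort])
  · refine supported_mono (fun s hs ↦ ?_) (by simpa using signedSort_mem_supported ρ (l.map π))
    exact mem_simplices.2 (by rw [hs.2.length_eq, List.length_map, hS j l hl])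
  · simpa [pushforward_simplexBoundary] using boundary_signedSort (K := K) (hinj j l hl)
  · rw [LinearMap.comp_apply, pushforward_chainAction hπ, sorting_chainAction hρ]
    rfl

variable [Fact a.Prime] [CharP K a]

lemma IsTower.boundary_chainAction_apply (he : IsTower a α S (N + 1) e) :
    boundary K X (chainAction K (List X) (genericElement a α ^ periodicExponent a (N + 1))
      (e (N + 1))) = 0 := by
  rw [boundary_chainAction, he.boundary_succ N N.lt_succ_self, ← Module.End.mul_apply, ← map_mul,
    ← pow_add, add_comm, periodicExponent_add_succ (Fact.out : a.Prime).pos, genericElement_pow,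
    map_zero, LinearMap.zero_apply]

variable [Algebra (ZMod a) K]

lemma IsTower.exists_eq_boundary_add (hX : ∀ x : X, ∃ g : ElementaryAbelian a ι, g • x ≠ x)
    (hα : LinearIndependent (ZMod a) α) (he : IsTower a α (fun j ↦ simplices a ι X (j + 1)) N e)
    (hN : e N = 0) {j : ℕ} (hj : j ≤ N) :
    ∃ f ∈ supported K K (simplices a ι X (j + 1) : Set (List X)),
      ∃ f' ∈ supported K K (simplices a ι X (j + 2) : Set (List X)), e j = boundary K X f' +
        chainAction K (List X) (genericElement a α ^ periodicExponent a (j + 1)) f := by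
  induction hj using Nat.decreasingInduction with
  | self => exact ⟨0, Submodule.zero_mem _, 0, Submodule.zero_mem _, by simp [hN]⟩
  | of_succ j hj ih =>
    obtain ⟨f, hf, f', -, h⟩ := ih
    have hker : chainAction K (List X) (genericElement a α ^ periodicExponent a j)
        (e j - boundary K X f) = 0 := by
      rw [map_sub, ← he.boundary_succ j hj, h, map_add, boundary_boundary, boundary_chainAction,
        periodicExponent_add_two, zero_add, sub_self]
    have hmem : boundary K X f ∈ supported K K (simplices a ι X (j + 1) : Set (List X)) :=
      boundary_mem_supported (fun l hl l' _ hl' ↦ by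
        have : l.length = j + 2 := hl
        exact mem_simplices.2 (by omega)) hf
    obtain ⟨w, hw, hew⟩ := exists_genericElement_pow_eq (exists_smul_ne_of_mem_simplices hX) hα
      (periodicExponent_add_succ (Fact.out : a.Prime).pos j)
      (Submodule.sub_mem _ (he.mem_supported j hj.le) hmem) hker
    exact ⟨w, hw, f, hf, by rw [← hew]; abel⟩

-- If `e N = 0`, exactness of the chains over `K[x]/(x ^ a)` lets one descend to degree `0`, where
-- `∂ (e 0)` lands in the image of `x` although the augmentation of `e 0` is `1`.
lemma IsTower.apply_ne_zero (hX : ∀ x : X, ∃ g : ElementaryAbelian a ι, g • x ≠ x)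
    (hα : LinearIndependent (ZMod a) α) (he : IsTower a α (fun j ↦ simplices a ι X (j + 1)) N e) :
    e N ≠ 0 := by
  intro hN
  obtain ⟨f, -, f', -, h⟩ := he.exists_eq_boundary_add hX hα hN N.zero_le
  obtain ⟨q, hq⟩ : ∃ q, periodicExponent a (0 + 1) = q + 1 :=
    ⟨a - 2, by have := (Fact.out : a.Prime).two_le; simp [periodicExponent]; omega⟩
  have hempty : single [] 1 =
      chainAction K (List X) (genericElement a α) (chainAction K (List X) (genericElement a α ^ q)
        (boundary K X f)) := by
    rw [← he.boundary_zero, h, map_add, boundary_boundary, zero_add, boundary_chainAction, hq,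
      pow_succ', map_mul, Module.End.mul_apply]
  have := chainAction_genericElement_apply_fixed α
    (chainAction K (List X) (genericElement a α ^ q) (boundary K X f)) (z := ([] : List X))
    fun (_ : ElementaryAbelian a ι) ↦ rfl
  rw [← hempty, single_eq_same] at this
  exact one_ne_zero this

end Towers

section SmallChains

variable {K : Type*} [CommRing K] {X : Type*}

lemma signedSort_eq_zero_of_encard_lt {O : Type*} [LinearOrder O] {ρ : X → O} {l : List X}
    {s : Set O} (hl : ∀ x ∈ l, ρ x ∈ s) (hs : s.encard < l.length) : signedSort K ρ l = 0 := by
  refine signedSort_eq_zero ρ fun hnodup ↦ hs.not_ge ?_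
  classical
  calc (l.length : ℕ∞) = ((l.map ρ).toFinset : Set O).encard := by
        rw [Set.encard_coe_eq_coe_finsetCard, List.toFinset_card_of_nodup hnodup, List.length_map]
    _ ≤ s.encard := Set.encard_le_encard fun o ho ↦ by
        obtain ⟨x, hx, rfl⟩ : ∃ x ∈ l, ρ x = o := by simpa using ho
        exact hl x hx

variable [PseudoMetricSpace X]

variable (X) in
/-- The ordered simplices with `n` vertices at pairwise distance less than `δ`. -/
def smallSimplices (δ : ℝ) (n : ℕ) : Set (List X) :=
  {l | l.length = n ∧ ∀ x ∈ l, ∀ y ∈ l, dist x y < δ}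

lemma smallSimplices_mono {δ δ' : ℝ} (h : δ ≤ δ') (n : ℕ) :
    smallSimplices X δ n ⊆ smallSimplices X δ' n :=
  fun _ hl ↦ ⟨hl.1, fun x hx y hy ↦ (hl.2 x hx y hy).trans_le h⟩

lemma smul_mem_smallSimplices {Γ : Type*} [Group Γ] [MulAction Γ X] [IsIsometricSMul Γ X]
    {δ : ℝ} {n : ℕ} (g : Γ) {l : List X} (hl : l ∈ smallSimplices X δ n) :
    g • l ∈ smallSimplices X δ n := by
  refine ⟨(length_smul g l).trans hl.1, fun x hx y hy ↦ ?_⟩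
  rw [smul_list_eq_map] at hx hy
  obtain ⟨x, hx', rfl⟩ := List.mem_map.1 hx
  obtain ⟨y, hy', rfl⟩ := List.mem_map.1 hy
  simpa using hl.2 x hx' y hy'

lemma simplexPrism_mem_supported_smallSimplices {O : Type*} [LinearOrder O] (ρ : X → O)
    {π : X → X} {ε : ℝ} (hπ : ∀ x, dist (π x) x < ε) {n : ℕ} {l : List X}
    (hl : l ∈ smallSimplices X ε n) :
    simplexPrism K ρ π l ∈ supported K K (smallSimplices X (3 * ε) (n + 1)) := by
  refine supported_mono ?_ (simplexPrism_mem_supported ρ π l)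
  rintro t ⟨htl, ht⟩
  refine ⟨by rw [htl, hl.1], fun x hx y hy ↦ ?_⟩
  have hclose (x) (hx : x ∈ t) : ∃ x' ∈ l, dist x x' < ε := by
    rcases List.mem_append.1 (ht hx) with hx | hx
    · exact ⟨x, hx, hl.2 x hx x hx⟩
    · obtain ⟨x', hx', rfl⟩ := List.mem_map.1 hx
      exact ⟨x', hx', hπ x'⟩
  obtain ⟨x', hx', hxx'⟩ := hclose x hx
  obtain ⟨y', hy', hyy'⟩ := hclose y hy
  have := dist_triangle4_right x y x' y'
  linarith [hl.2 x' hx' y' hy']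

/-- Covering dimension at most `k`, for compact `X`: there are arbitrarily fine partitions of `X`
such that every sufficiently small ball meets at most `k + 1` parts. A partition is encoded by the
map `π` sending each part to a nearby point. -/
def CoveringDimLE (X : Type*) [PseudoMetricSpace X] (k : ℕ) : Prop :=
  ∀ ε > 0, ∃ π : X → X, (∀ x, dist (π x) x < ε) ∧
    ∃ η > 0, ∀ x, (π '' Metric.ball x η).encard ≤ k + 1

variable (K) in
lemma CoveringDimLE.exists_filling {k : ℕ} (hX : CoveringDimLE X k) {ε : ℝ} (hε : 0 < ε) :
    ∃ δ > 0, ∀ n ≥ k + 2, ∀ z ∈ supported K K (smallSimplices X δ n), boundary K X z = 0 →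
      ∃ w ∈ supported K K (smallSimplices X ε (n + 1)), boundary K X w = z := by
  obtain ⟨π, hπ, η, hη, hcard⟩ := hX (ε / 3) (by positivity)
  refine ⟨min (ε / 3) η, lt_min (by positivity) hη, fun n hn z hz hbz ↦ ?_⟩
  let _ : LinearOrder X := IsWellOrder.linearOrder WellOrderingRel
  refine ⟨prism K id π z, map_mem_of_mem_supported (fun l hl ↦ ?_) hz, ?_⟩
  · rw [prism_single]
    simpa only [mul_div_cancel₀ ε three_ne_zero] using simplexPrism_mem_supported_smallSimplices
      id hπ (smallSimplices_mono (min_le_left _ _) n hl)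
  · have hsort (l) (hl : l ∈ smallSimplices X (min (ε / 3) η) n) :
        signedSort K id (l.map π) = 0 := by
      obtain ⟨x, hx⟩ := List.exists_mem_of_length_pos (l := l) (by rw [hl.1]; omega)
      refine signedSort_eq_zero_of_encard_lt (s := π '' Metric.ball x η) ?_ ?_
      · intro y' hy'
        obtain ⟨y, hy, rfl⟩ := List.mem_map.1 hy'
        exact ⟨y, (hl.2 y hy x hx).trans_le (min_le_right _ _), rfl⟩
      · rw [List.length_map, hl.1]
        exact (hcard x).trans_lt (by exact_mod_cast hn)
    have := eq_on_supported (f := boundary K X ∘ₗ prism K id π + prism K id π ∘ₗ boundary K X)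
      (g := LinearMap.id) (fun l hl ↦ by
        simpa [hsort l hl] using boundary_simplexPrism (K := K) (ρ := id) (π := π) (l := l)
          (fun _ _ _ _ h ↦ h)) hz
    simpa [hbz] using this

end SmallChains

section Slices

lemma exists_orbit_separation (Γ X : Type*) [Group Γ] [Finite Γ] [MetricSpace X] [MulAction Γ X] :
    ∃ r : MulAction.orbitRel.Quotient Γ X → ℝ, (∀ o, 0 < r o) ∧
      ∀ o, ∀ x ∈ o.orbit, ∀ y ∈ o.orbit, dist x y < r o → x = y := by
  have hr (o : MulAction.orbitRel.Quotient Γ X) :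
      ∃ r > 0, ∀ x ∈ o.orbit, ∀ y ∈ o.orbit, dist x y < r → x = y := by
    have hfin : o.orbit.Finite := by
      rw [o.orbit_eq_orbit_out Quotient.out_eq']
      exact Set.finite_range _
    have hpos : 0 < o.orbit.einfsep := hfin.einfsep_pos
    obtain ⟨r, hr, hlt⟩ := ENNReal.lt_iff_exists_nnreal_btwn.1 hpos
    refine ⟨r, by exact_mod_cast hr, fun x hx y hy hxy ↦ ?_⟩
    by_contra hne
    refine (Set.einfsep_le_edist_of_mem hx hy hne).not_gt (lt_trans ?_ hlt)
    rwa [edist_dist, ENNReal.ofReal_lt_coe_iff (by positivity)]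
  choose r hr using hr
  exact ⟨r, fun o ↦ (hr o).1, fun o ↦ (hr o).2⟩

lemma exists_map_near_finset_orbits {Γ X : Type*} [Group Γ] [PseudoMetricSpace X] [CompactSpace X]
    [MulAction Γ X] [IsIsometricSMul Γ X] {r : MulAction.orbitRel.Quotient Γ X → ℝ}
    (hr : ∀ o, 0 < r o) :
    ∃ (C : Finset (MulAction.orbitRel.Quotient Γ X))
      (c : MulAction.orbitRel.Quotient Γ X → MulAction.orbitRel.Quotient Γ X) (π : X → X),
      (∀ o, c o ∈ C) ∧ (∀ x, Quotient.mk _ (π x) = c (Quotient.mk _ x)) ∧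
        ∀ x, dist x (π x) < r (Quotient.mk _ (π x)) := by
  classical
  let mk (x : X) : MulAction.orbitRel.Quotient Γ X := Quotient.mk _ x
  have mk_smul (g : Γ) x : mk (g • x) = mk x := Quotient.sound ⟨g, rfl⟩
  obtain ⟨C, hC⟩ := CompactSpace.elim_nhds_subcover (fun x : X ↦ Metric.ball x (r (mk x)))
    fun x ↦ Metric.ball_mem_nhds x (hr (mk x))
  have exists_center (o : MulAction.orbitRel.Quotient Γ X) :
      ∃ c ∈ C, dist o.out c < r (mk c) := by
    simpa using hC.ge (Set.mem_univ o.out)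
  choose c hcC hc using exists_center
  have exists_near (x : X) : ∃ p, mk p = mk (c (mk x)) ∧ dist x p < r (mk p) := by
    obtain ⟨g, hg⟩ : ∃ g : Γ, g • (mk x).out = x :=
      (MulAction.orbitRel Γ X).symm (Quotient.mk_out x)
    refine ⟨g • c (mk x), mk_smul _ _, ?_⟩
    rw [mk_smul]
    nth_rw 1 [← hg]
    simpa using hc (mk x)
  choose π hπ_mk hπ_dist using exists_near
  exact ⟨C.image mk, fun o ↦ mk (c o), π, fun o ↦ Finset.mem_image_of_mem mk (hcC o), hπ_mk,
    hπ_dist⟩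

lemma exists_equivariant_discretization (Γ X : Type*) [Group Γ] [Finite Γ] [MetricSpace X]
    [CompactSpace X] [MulAction Γ X] [IsIsometricSMul Γ X] :
    ∃ π : X → X, (∀ (g : Γ) x, π (g • x) = g • π x) ∧
      (Set.range fun x ↦ (Quotient.mk _ (π x) : MulAction.orbitRel.Quotient Γ X)).Finite ∧
      ∃ δ > 0, ∀ x y, dist x y < δ →
        (Quotient.mk _ (π x) : MulAction.orbitRel.Quotient Γ X) = Quotient.mk _ (π y) →
          π x = π y := by
  let mk (x : X) : MulAction.orbitRel.Quotient Γ X := Quotient.mk _ x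
  have mk_smul (g : Γ) x : mk (g • x) = mk x := Quotient.sound ⟨g, rfl⟩
  obtain ⟨r, hr_pos, hr⟩ := exists_orbit_separation Γ X
  have separated {x y : X} (hmk : mk x = mk y) (h : dist x y < r (mk x)) : x = y :=
    hr (mk x) x (MulAction.orbitRel.Quotient.mem_orbit.2 rfl) y
      (MulAction.orbitRel.Quotient.mem_orbit.2 hmk.symm) h
  obtain ⟨C, c, π, hcC, hπ_mk, hπ_dist⟩ :=
    exists_map_near_finset_orbits fun o ↦ div_pos (hr_pos o) three_pos
  replace hπ_mk (x : X) : mk (π x) = c (mk x) := hπ_mk x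
  replace hπ_dist (x : X) : dist x (π x) < r (mk (π x)) / 3 := hπ_dist x
  have hπC (x : X) : mk (π x) ∈ C := hπ_mk x ▸ hcC (mk x)
  obtain ⟨δ, hδ, hδr⟩ : ∃ δ > 0, ∀ o ∈ C, δ ≤ r o / 3 :=
    (eventually_mem_nhdsWithin.and ((Filter.eventually_all_finset C).2 fun o _ ↦
      Ioc_mem_nhdsGT (div_pos (hr_pos o) three_pos))).exists.imp fun _ h ↦
        ⟨h.1, fun o ho ↦ (h.2 o ho).2⟩
  refine ⟨π, fun g x ↦ ?_, ?_, δ, hδ, fun x y hxy hmk ↦ separated hmk ?_⟩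
  · have hmk : mk (π (g • x)) = mk (g • π x) := by rw [mk_smul, hπ_mk, hπ_mk, mk_smul]
    refine separated hmk ?_
    have h₁ := hπ_dist (g • x)
    have h₂ := hπ_dist x
    rw [← dist_smul g, ← mk_smul g (π x), ← hmk] at h₂
    linarith [dist_triangle_left (π (g • x)) (g • π x) (g • x), hr_pos (mk (π (g • x)))]
  · exact C.finite_toSet.subset (Set.range_subset_iff.2 hπC)
  · have h₁ := hπ_dist y
    rw [← show mk (π x) = mk (π y) from hmk] at h₁
    linarith [hπ_dist x, hδr _ (hπC x), dist_triangle4_left x y (π x) (π y)]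

end Slices

section Obstruction

variable {K : Type*} [Field K] {a : ℕ} {ι : Type*} [Fintype ι] [DecidableEq ι] {α : ι → K}
  {X : Type*} [MetricSpace X] [MulAction (ElementaryAbelian a ι) X]
  [IsIsometricSMul (ElementaryAbelian a ι) X] [Fact a.Prime] [CharP K a]

lemma CoveringDimLE.exists_smallTower {k : ℕ} (hX : CoveringDimLE X k)
    (h : ∀ δ > 0, ∃ e, IsTower a α (fun j ↦ smallSimplices X δ (j + 1)) (k + 1) e) {N : ℕ}
    (hN : k + 1 ≤ N) : ∀ δ > 0, ∃ e, IsTower a α (fun j ↦ smallSimplices X δ (j + 1)) N e := by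
  induction N, hN using Nat.le_induction with
  | base => exact h
  | succ N hN ih =>
    intro ε hε
    obtain ⟨δ, hδ, hfill⟩ := hX.exists_filling K hε
    obtain ⟨e, he⟩ := ih (min δ ε) (lt_min hδ hε)
    obtain ⟨N, rfl⟩ := Nat.exists_eq_add_of_le' (Nat.le_of_add_left_le hN)
    obtain ⟨w, hw, hbw⟩ := hfill (N + 1 + 1) (by omega) _
      (chainAction_mem_supported (fun g l ↦ smul_mem_smallSimplices g) _
        (supported_mono (smallSimplices_mono (min_le_left δ ε) _) (he.mem_supported _ le_rfl)))
      he.boundary_chainAction_apply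
    exact ⟨_, (he.mono fun j ↦ smallSimplices_mono (min_le_right δ ε) _).succ hw hbw⟩

-- A small tower longer than the number of orbits of values of `π` is killed in top degree by
-- moving vertices along `π` and sorting, which contradicts the descent.
theorem CoveringDimLE.not_forall_exists_smallTower [Algebra (ZMod a) K] [CompactSpace X] {k : ℕ}
    (hX : CoveringDimLE X k) (hfree : ∀ x : X, ∃ g : ElementaryAbelian a ι, g • x ≠ x)
    (hα : LinearIndependent (ZMod a) α) :
    ¬∀ δ > 0, ∃ e, IsTower a α (fun j ↦ smallSimplices X δ (j + 1)) (k + 1) e := by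
  intro h
  have : NeZero a := ⟨(Fact.out : a.Prime).ne_zero⟩
  obtain ⟨π, hπ_smul, hfin, δ, hδ, hπ⟩ :=
    exists_equivariant_discretization (ElementaryAbelian a ι) X
  let O := MulAction.orbitRel.Quotient (ElementaryAbelian a ι) X
  let _ : LinearOrder O := IsWellOrder.linearOrder WellOrderingRel
  let ρ (x : X) : O := Quotient.mk _ x
  have hρ (g : ElementaryAbelian a ι) x : ρ (g • x) = ρ x := Quotient.sound ⟨g, rfl⟩
  set Q : Set O := Set.range fun x ↦ ρ (π x)
  obtain ⟨e, he⟩ := hX.exists_smallTower h (N := k + 1 + Q.ncard) (by omega) δ hδ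
  refine (he.sort hρ hπ_smul (fun j l hl ↦ hl.1) fun j l hl ↦ ?_).apply_ne_zero hfree hα ?_
  · intro x' hx' y' hy' hxy
    obtain ⟨x, hx, rfl⟩ := List.mem_map.1 hx'
    obtain ⟨y, hy, rfl⟩ := List.mem_map.1 hy'
    exact hπ x y (hl.2 x hx y hy) hxy
  · refine eq_on_supported (f := sorting K ρ ∘ₗ pushforward K π) (g := 0) (fun l hl ↦ ?_)
      (he.mem_supported _ le_rfl)
    have : signedSort K ρ (l.map π) = 0 := by
      refine signedSort_eq_zero_of_encard_lt (s := Q) (fun y hy ↦ ?_) ?_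
      · obtain ⟨x, -, rfl⟩ := List.mem_map.1 hy
        exact ⟨x, rfl⟩
      · rw [List.length_map, hl.1, ← hfin.cast_ncard_eq]
        exact_mod_cast (by omega : Q.ncard < k + 1 + Q.ncard + 1)
    simpa using this

end Obstruction

section IsometricModel

lemma CoveringDimLE.of_leftInverse {X Y : Type*} [PseudoMetricSpace X] [CompactSpace X]
    [PseudoMetricSpace Y] [CompactSpace Y] {k : ℕ} (hY : CoveringDimLE Y k) {f : X → Y} {g : Y → X}
    (hf : Continuous f) (hg : Continuous g) (hgf : Function.LeftInverse g f) :
    CoveringDimLE X k := by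
  intro ε hε
  obtain ⟨δ, hδ, hgδ⟩ := Metric.uniformContinuous_iff.1
    (CompactSpace.uniformContinuous_of_continuous hg) ε hε
  obtain ⟨π, hπ, η, hη, hcard⟩ := hY δ hδ
  obtain ⟨η', hη', hfη⟩ := Metric.uniformContinuous_iff.1
    (CompactSpace.uniformContinuous_of_continuous hf) η hη
  refine ⟨g ∘ π ∘ f, fun x ↦ ?_, η', hη', fun x ↦ ?_⟩
  · simpa only [hgf x, Function.comp_apply] using hgδ (hπ (f x))
  · calc (g ∘ π ∘ f '' Metric.ball x η').encard
      _ ≤ (g '' (π '' Metric.ball (f x) η)).encard := by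
        refine Set.encard_le_encard ?_
        rw [Set.image_comp, Set.image_comp]
        exact Set.image_mono (Set.image_mono (Set.image_subset_iff.2 fun y hy ↦ hfη hy))
      _ ≤ k + 1 := (Set.encard_image_le _ _).trans (hcard (f x))

lemma edist_orbit_smul {Γ X : Type*} [Group Γ] [Fintype Γ] [PseudoEMetricSpace X] [MulAction Γ X]
    (h : Γ) (x y : X) :
    edist (fun g : Γ ↦ g • h • x) (fun g ↦ g • h • y) =
      edist (fun g : Γ ↦ g • x) fun g ↦ g • y := by
  simp only [edist_pi_def, Finset.sup_univ_eq_iSup, ← mul_smul]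
  exact (Equiv.mulRight h).iSup_comp (g := fun g ↦ edist (g • x) (g • y))

/-- A copy of the `Γ`-space `X` with the invariant metric `max_g dist (g • x) (g • y)`. -/
def OrbitMetric (_Γ X : Type*) : Type _ := X

namespace OrbitMetric

variable {Γ X : Type*} [Group Γ] [MetricSpace X] [MulAction Γ X]

instance : MulAction Γ (OrbitMetric Γ X) := inferInstanceAs (MulAction Γ X)

variable [Finite Γ]

noncomputable instance : MetricSpace (OrbitMetric Γ X) :=
  letI := Fintype.ofFinite Γ
  MetricSpace.induced (fun (x : X) (g : Γ) ↦ g • x)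
    (fun x y h ↦ (one_smul Γ (x : X)).symm.trans ((congrFun h 1).trans (one_smul Γ (y : X))))
    inferInstance

instance : IsIsometricSMul Γ (OrbitMetric Γ X) where
  isometry_smul h x y :=
    letI := Fintype.ofFinite Γ
    edist_orbit_smul (X := X) h x y

variable [CompactSpace X] [ContinuousConstSMul Γ X]

variable (Γ X) in
/-- The invariant metric induces the original topology. -/
noncomputable def homeomorph : X ≃ₜ OrbitMetric Γ X :=
  Continuous.homeoOfEquivCompactToT2 (f := Equiv.refl X)
    (continuous_induced_rng.2 (continuous_pi fun g ↦ continuous_const_smul g))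

lemma homeomorph_smul (g : Γ) (x : X) : homeomorph Γ X (g • x) = g • homeomorph Γ X x := rfl

instance : CompactSpace (OrbitMetric Γ X) := (homeomorph Γ X).compactSpace

lemma coveringDimLE {k : ℕ} (hX : CoveringDimLE X k) : CoveringDimLE (OrbitMetric Γ X) k :=
  hX.of_leftInverse (homeomorph Γ X).symm.continuous (homeomorph Γ X).continuous
    (homeomorph Γ X).apply_symm_apply

end OrbitMetric

end IsometricModel

section SphereDimension

variable {ι : Type*} [Fintype ι]

lemma encard_floor_add_le (x : ι → ℝ) {i₀ : ι} (hx : x i₀ ∈ Set.range Int.cast) :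
    ((fun (u : ℝ) i ↦ ⌊x i + u⌋) '' Set.Ico 0 1).encard ≤ Fintype.card ι := by
  classical
  set v : ℝ → ι → ℤ := fun u i ↦ ⌊x i + u⌋
  have hv_mono : Monotone v := fun u u' huu' i ↦ by dsimp only [v]; gcongr
  have hinj : Set.InjOn (fun w : ι → ℤ ↦ ∑ i, w i) (v '' Set.Ico 0 1) := by
    rintro _ ⟨u, -, rfl⟩ _ ⟨u', -, rfl⟩ hsum
    rcases le_total u u' with huu' | huu'
    · exact (hv_mono huu').eq_of_not_lt fun h ↦ (Fintype.sum_strictMono h).ne hsum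
    · exact (hv_mono huu').eq_of_not_lt (fun h ↦ (Fintype.sum_strictMono h).ne' hsum) |>.symm
  have hsum (u : ℝ) (hu : u ∈ Set.Ico (0 : ℝ) 1) :
      ∑ i, v u i ∈ Finset.Ico (∑ i, ⌊x i⌋) (∑ i, ⌊x i⌋ + Fintype.card ι) := by
    refine Finset.mem_Ico.2 ⟨Finset.sum_le_sum fun i _ ↦ Int.floor_mono (by linarith [hu.1]), ?_⟩
    have hle (i : ι) : v u i ≤ ⌊x i⌋ + 1 := by
      rw [← Int.floor_add_one]
      exact Int.floor_mono (by linarith [hu.2])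
    have hlt : v u i₀ < ⌊x i₀⌋ + 1 := by
      obtain ⟨c, hc⟩ := hx
      simp only [v, ← hc, Int.floor_intCast_add, Int.floor_intCast, Int.floor_eq_zero_iff.2 hu]
      omega
    simpa [Finset.sum_add_distrib] using
      Finset.sum_lt_sum (fun i _ ↦ hle i) ⟨i₀, Finset.mem_univ _, hlt⟩
  rw [← hinj.encard_image]
  calc _ ≤ (Finset.Ico (∑ i, ⌊x i⌋) (∑ i, ⌊x i⌋ + Fintype.card ι) : Set ℤ).encard :=
        Set.encard_le_encard (Set.image_subset_iff.2 (Set.image_subset_iff.2 hsum))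
    _ = Fintype.card ι := by rw [Set.encard_coe_eq_coe_finsetCard]; simp

lemma exists_shift_locallyConstant_floor {ι : Type*} [Finite ι] (x : ι → ℝ) :
    ∃ u ∈ Set.Ico (0 : ℝ) 1, ∀ᶠ y in nhds x, ∀ i, ⌊y i + u⌋ = ⌊x i + u⌋ := by
  obtain ⟨u, hu, hne⟩ := (Set.Ico_infinite (zero_lt_one (α := ℝ))).exists_notMem_finite
    (Set.finite_range fun i ↦ Int.fract (-x i))
  refine ⟨u, hu, Filter.eventually_all.2 fun i ↦ ?_⟩
  have hfloor_lt : (⌊x i + u⌋ : ℝ) < x i + u := by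
    refine (Int.floor_le _).lt_of_ne fun h ↦ hne ⟨i, ?_⟩
    have : -x i = u - ⌊x i + u⌋ := by linarith
    simp only [this, Int.fract_sub_intCast]
    exact Int.fract_eq_self.2 hu
  have hcont : Filter.Tendsto (fun y : ι → ℝ ↦ y i + u) (nhds x) (nhds (x i + u)) :=
    ((continuous_apply i).add continuous_const).tendsto x
  filter_upwards [hcont (Ioo_mem_nhds hfloor_lt (Int.lt_floor_add_one _))] with y hy
  exact Int.floor_eq_iff.2 ⟨hy.1.le, hy.2⟩

lemma exists_uniform_shift {s : Set (ι → ℝ)} (hs : IsCompact s) :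
    ∃ η > 0, ∀ x ∈ s, ∃ u ∈ Set.Ico (0 : ℝ) 1,
      ∀ y ∈ Metric.ball x η, ∀ i, ⌊y i + u⌋ = ⌊x i + u⌋ := by
  choose u hu hloc using exists_shift_locallyConstant_floor (ι := ι)
  obtain ⟨η, hη, hball⟩ :=
    Metric.uniformity_basis_dist.lebesgue_number_lemma_nhds hs fun x _ ↦ hloc x
  refine ⟨η, hη, fun x hx ↦ ?_⟩
  obtain ⟨z, hz⟩ := hball x hx
  have hxz : ∀ i, ⌊x i + u z⌋ = ⌊z i + u z⌋ := hz (by simpa [UniformSpace.ball] using hη)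
  exact ⟨u z, hu z, fun y hy i ↦ (hz (Metric.mem_ball'.1 hy) i).trans (hxz i).symm⟩

/-- Rounding `x` coordinatewise to the lattice `N⁻¹ ℤ ^ ι`, with the breakpoints shifted by `u`. -/
noncomputable def gridRound (N : ℕ) (u : ℝ) (x : ι → ℝ) : ι → ℝ := fun i ↦ ⌊N * x i + u⌋ / N

lemma dist_gridRound_le {N : ℕ} (hN : 0 < N) {u : ℝ} (hu : u ∈ Set.Ico (0 : ℝ) 1) (x : ι → ℝ) :
    dist (gridRound N u x) x ≤ (N : ℝ)⁻¹ := by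
  have hN' : (0 : ℝ) < N := Nat.cast_pos.2 hN
  refine (dist_pi_le_iff (by positivity)).2 fun i ↦ ?_
  have : gridRound N u x i - x i = (⌊N * x i + u⌋ - N * x i) / N := by
    simp only [gridRound]; field_simp
  rw [Real.dist_eq, this, abs_div, abs_of_pos hN']
  rw [inv_eq_one_div]
  gcongr
  rw [abs_le]
  constructor <;>
    linarith [Int.floor_le (N * x i + u), Int.lt_floor_add_one (N * x i + u), hu.1, hu.2]

lemma exists_abs_eq_one_of_mem_sphere {x : ι → ℝ} (hx : x ∈ Metric.sphere 0 1) :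
    ∃ i, |x i| = 1 := by
  rw [mem_sphere_zero_iff_norm] at hx
  by_contra! h
  refine ((pi_norm_lt_iff one_pos).2 fun i ↦ ?_).ne hx
  exact (hx ▸ norm_le_pi_norm x i : ‖x i‖ ≤ 1).lt_of_ne (h i)

lemma exists_mul_eq_intCast_of_mem_sphere {x : ι → ℝ} (hx : x ∈ Metric.sphere 0 1) (N : ℕ) :
    ∃ (i : ι) (c : ℤ), c = N * x i ∧ |c| = N := by
  obtain ⟨i, hi⟩ := exists_abs_eq_one_of_mem_sphere hx
  rcases eq_or_eq_neg_of_abs_eq hi with hi | hi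
  · exact ⟨i, N, by simp [hi], by simp⟩
  · exact ⟨i, -N, by simp [hi], by simp⟩

lemma gridRound_mem_sphere {N : ℕ} (hN : 0 < N) {u : ℝ} (hu : u ∈ Set.Ico (0 : ℝ) 1) {x : ι → ℝ}
    (hx : x ∈ Metric.sphere 0 1) : gridRound N u x ∈ Metric.sphere 0 1 := by
  have hN' : (0 : ℝ) < N := Nat.cast_pos.2 hN
  obtain ⟨i₀, c, hc, hcN⟩ := exists_mul_eq_intCast_of_mem_sphere hx N
  rw [mem_sphere_zero_iff_norm] at hx ⊢
  refine le_antisymm ((pi_norm_le_iff_of_nonneg zero_le_one).2 fun i ↦ ?_) ?_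
  · have habs := abs_le.1 (hx ▸ norm_le_pi_norm x i : |x i| ≤ 1)
    have hlt : ⌊N * x i + u⌋ < (N : ℤ) + 1 := Int.floor_lt.2 (by push_cast; nlinarith [hu.2])
    have hle : -(N : ℤ) ≤ ⌊N * x i + u⌋ := Int.le_floor.2 (by push_cast; nlinarith [hu.1])
    rw [gridRound, Real.norm_eq_abs, abs_div, abs_of_pos hN', div_le_one hN']
    exact_mod_cast abs_le.2 ⟨hle, Int.lt_add_one_iff.1 hlt⟩
  · have : gridRound N u x i₀ = c / N := by
      rw [gridRound, ← hc, Int.floor_intCast_add, Int.floor_eq_zero_iff.2 hu, add_zero]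
    calc (1 : ℝ) = ‖gridRound N u x i₀‖ := by
          rw [this, Real.norm_eq_abs, abs_div, abs_of_pos hN', ← Int.cast_abs, hcN,
            Int.cast_natCast, div_self hN'.ne']
      _ ≤ ‖gridRound N u x‖ := norm_le_pi_norm _ _

lemma encard_gridRound_le (N : ℕ) {x : ι → ℝ} (hx : x ∈ Metric.sphere 0 1) :
    ((gridRound N · x) '' Set.Ico 0 1).encard ≤ Fintype.card ι := by
  obtain ⟨i₀, c, hc, -⟩ := exists_mul_eq_intCast_of_mem_sphere hx N
  have himage : (gridRound N · x) '' Set.Ico 0 1 = (fun (v : ι → ℤ) i ↦ (v i : ℝ) / N) ''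
      ((fun (u : ℝ) i ↦ ⌊N * x i + u⌋) '' Set.Ico 0 1) := by
    rw [Set.image_image]; rfl
  rw [himage]
  exact (Set.encard_image_le _ _).trans (encard_floor_add_le (fun i ↦ N * x i) ⟨c, hc⟩)

lemma coveringDimLE_cubeSphere (k : ℕ) :
    CoveringDimLE (Metric.sphere (0 : Fin (k + 1) → ℝ) 1) k := by
  intro ε hε
  obtain ⟨N, hN, hNε⟩ := Real.exists_nat_pos_inv_lt hε
  have hN' : (0 : ℝ) < N := Nat.cast_pos.2 hN
  obtain ⟨η, hη, hshift⟩ := exists_uniform_shift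
    ((isCompact_sphere (0 : Fin (k + 1) → ℝ) 1).image (continuous_const_smul (N : ℝ)))
  have hshift_sphere (x : Metric.sphere (0 : Fin (k + 1) → ℝ) 1) : ∃ u ∈ Set.Ico (0 : ℝ) 1,
      ∀ y ∈ Metric.ball ((N : ℝ) • x.1) η, ∀ i, ⌊y i + u⌋ = ⌊N * x.1 i + u⌋ :=
    hshift _ ⟨x, x.2, rfl⟩
  choose u hu hfloor using hshift_sphere
  refine ⟨fun x ↦ ⟨gridRound N (u x) x, gridRound_mem_sphere hN (hu x) x.2⟩,
    fun x ↦ (dist_gridRound_le hN (hu x) x.1).trans_lt hNε,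
    η / N, div_pos hη (Nat.cast_pos.2 hN), fun x ↦ ?_⟩
  rw [← Subtype.val_injective.encard_image]
  refine (Set.encard_le_encard ?_).trans (by simpa using encard_gridRound_le N x.2)
  rintro _ ⟨_, ⟨y, hy, rfl⟩, rfl⟩
  refine ⟨u y, hu y, funext fun i ↦ ?_⟩
  have hdist : (N : ℝ) • x.1 ∈ Metric.ball ((N : ℝ) • y.1) η := by
    rw [Metric.mem_ball, dist_smul₀, Real.norm_natCast, ← lt_div_iff₀' hN', dist_comm]
    exact hy
  exact congrArg (fun v : ℤ ↦ (v : ℝ) / N) (hfloor y _ hdist i)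

lemma coveringDimLE_sphere (k : ℕ) :
    CoveringDimLE (Metric.sphere (0 : EuclideanSpace ℝ (Fin (k + 1))) 1) k := by
  have hx0 (x : Metric.sphere (0 : EuclideanSpace ℝ (Fin (k + 1))) 1) : ‖WithLp.ofLp x.1‖ ≠ 0 := by
    simpa using ne_zero_of_mem_unit_sphere x
  have hy0 (y : Metric.sphere (0 : Fin (k + 1) → ℝ) 1) : ‖WithLp.toLp 2 y.1‖ ≠ 0 := by
    simpa using ne_zero_of_mem_unit_sphere y
  refine (coveringDimLE_cubeSphere k).of_leftInverse
    (f := fun x ↦ ⟨‖WithLp.ofLp x.1‖⁻¹ • WithLp.ofLp x.1, by simp [norm_smul, hx0]⟩)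
    (g := fun y ↦ ⟨‖WithLp.toLp 2 y.1‖⁻¹ • WithLp.toLp 2 y.1, by simp [norm_smul, hy0]⟩)
    ?_ ?_ fun x ↦ Subtype.ext ?_
  · have hc := (PiLp.continuous_ofLp 2 fun _ : Fin (k + 1) ↦ ℝ).comp (continuous_subtype_val
      (p := (· ∈ Metric.sphere (0 : EuclideanSpace ℝ (Fin (k + 1))) 1)))
    exact ((hc.norm.inv₀ hx0).smul hc).subtype_mk _
  · have hc := (PiLp.continuous_toLp 2 fun _ : Fin (k + 1) ↦ ℝ).comp (continuous_subtype_val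
      (p := (· ∈ Metric.sphere (0 : Fin (k + 1) → ℝ) 1)))
    exact ((hc.norm.inv₀ hy0).smul hc).subtype_mk _
  · have hx : ‖x.1‖ = 1 := mem_sphere_zero_iff_norm.1 x.2
    simp only [WithLp.toLp_smul, WithLp.toLp_ofLp, norm_smul, norm_inv, norm_norm, hx, mul_one,
      inv_inv, smul_smul, mul_inv_cancel₀ (hx0 x), one_smul]

end SphereDimension

section Subdivision

variable (K : Type*) [CommRing K] {X Z : Type*}

lemma simplexBoundary_ofFn {n : ℕ} (t : Fin (n + 1) → X) :
    simplexBoundary K (List.ofFn t) =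
      ∑ i : Fin (n + 1), (-1 : ℤ) ^ (i : ℕ) • single (List.ofFn (t ∘ i.succAbove)) 1 := by
  induction n with
  | zero => simp [simplexBoundary]
  | succ n ih =>
    have cone_face (i : Fin (n + 1)) : cone K (t 0) (single (List.ofFn ((t ∘ Fin.succ) ∘
        i.succAbove)) 1) = single (List.ofFn (t ∘ i.succ.succAbove)) 1 := by
      rw [cone_single, List.ofFn_succ (f := t ∘ _)]
      simp [Function.comp_def]
    rw [List.ofFn_succ, simplexBoundary, ← Function.comp_def t Fin.succ, ih,
      Fin.sum_univ_succ (n := n + 1), sub_eq_add_neg, map_sum, ← Finset.sum_neg_distrib]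
    simp only [map_zsmul, cone_face, Fin.val_succ, pow_succ, mul_neg_one, neg_smul]
    simp [Function.comp_def]

/-- The subdivision of an ordered simplex with `n` vertices with respect to a choice `β v l` of a
barycenter of the simplex `v :: l`: the cone from the barycenter on the subdivided boundary. The
number of vertices is a separate argument so that the recursion is structural. -/
noncomputable def simplexSubdivision (β : X → List X → X) : ℕ → List X → (List X →₀ K)
  | 0, _ | _ + 1, [] => single [] 1
  | n + 1, v :: l => cone K (β v l)
      (linearCombination K (simplexSubdivision β n) (simplexBoundary K (v :: l)))

/-- The subdivision operator on ordered chains with respect to the barycenters `β`. -/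
noncomputable def subdivision (β : X → List X → X) : (List X →₀ K) →ₗ[K] (List X →₀ K) :=
  linearCombination K fun l ↦ simplexSubdivision K β l.length l

variable {K} (β : X → List X → X)

@[simp]
lemma subdivision_nil : subdivision K β (single [] 1) = single [] 1 := by
  simp [subdivision, simplexSubdivision]

lemma subdivision_cons (v : X) (l : List X) : subdivision K β (single (v :: l) 1) =
    cone K (β v l) (subdivision K β (simplexBoundary K (v :: l))) := by
  rw [subdivision, linearCombination_single, one_smul, List.length_cons, simplexSubdivision]
  congr 1
  refine eq_on_supported (fun t ht ↦ ?_) (simplexBoundary_mem_supported (v :: l))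
  rw [linearCombination_single, linearCombination_single,
    show t.length = l.length by simpa using ht.2]

lemma boundary_subdivision_simplex (l : List X) :
    boundary K X (subdivision K β (single l 1)) = subdivision K β (simplexBoundary K l) := by
  induction hn : l.length generalizing l with
  | zero => simp [List.length_eq_zero_iff.1 hn, simplexBoundary]
  | succ n ih =>
    obtain ⟨v, l, rfl⟩ := List.exists_cons_of_length_eq_add_one hn
    have faces : boundary K X (subdivision K β (simplexBoundary K (v :: l))) =
        subdivision K β (boundary K X (simplexBoundary K (v :: l))) := by
      refine eq_on_supported (f := boundary K X ∘ₗ subdivision K β)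
        (g := subdivision K β ∘ₗ boundary K X) (fun t ht ↦ ?_) (simplexBoundary_mem_supported _)
      simpa using ih t (by have := ht.2; omega)
    rw [subdivision_cons, boundary_cone, faces, boundary_simplexBoundary, map_zero, map_zero,
      sub_zero]

lemma boundary_subdivision (c : List X →₀ K) :
    boundary K X (subdivision K β c) = subdivision K β (boundary K X c) := by
  have : boundary K X ∘ₗ subdivision K β = subdivision K β ∘ₗ boundary K X := by
    ext1 l; ext1; simp [boundary_subdivision_simplex]
  exact LinearMap.congr_fun this c

lemma boundary_subdivision_pow (N : ℕ) (c : List X →₀ K) :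
    boundary K X ((subdivision K β ^ N) c) = (subdivision K β ^ N) (boundary K X c) := by
  have : Commute (boundary K X) (subdivision K β) := LinearMap.ext (boundary_subdivision β)
  exact LinearMap.congr_fun (this.pow_right N) c

variable {β} {β' : Z → List Z → Z} {f : X → Z}

lemma pushforward_subdivision_simplex (hf : ∀ v l, f (β v l) = β' (f v) (l.map f)) (l : List X) :
    pushforward K f (subdivision K β (single l 1)) = subdivision K β' (single (l.map f) 1) := by
  induction hn : l.length generalizing l with
  | zero => simp [List.length_eq_zero_iff.1 hn]
  | succ n ih =>
    obtain ⟨v, l, rfl⟩ := List.exists_cons_of_length_eq_add_one hn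
    have faces : pushforward K f (subdivision K β (simplexBoundary K (v :: l))) =
        subdivision K β' (pushforward K f (simplexBoundary K (v :: l))) := by
      refine eq_on_supported (f := pushforward K f ∘ₗ subdivision K β)
        (g := subdivision K β' ∘ₗ pushforward K f) (fun t ht ↦ ?_) (simplexBoundary_mem_supported _)
      simpa using ih t (by have := ht.2; omega)
    rw [List.map_cons, subdivision_cons, subdivision_cons, pushforward_cone, hf, faces,
      pushforward_simplexBoundary, List.map_cons]

lemma pushforward_subdivision_pow (hf : ∀ v l, f (β v l) = β' (f v) (l.map f)) (N : ℕ)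
    (c : List X →₀ K) : pushforward K f ((subdivision K β ^ N) c) =
      (subdivision K β' ^ N) (pushforward K f c) := by
  have semiconj : pushforward K f ∘ₗ subdivision K β = subdivision K β' ∘ₗ pushforward K f := by
    ext1 l; ext1; simp [pushforward_subdivision_simplex hf]
  induction N with
  | zero => rfl
  | succ N ih =>
    rw [pow_succ', pow_succ', Module.End.mul_apply, Module.End.mul_apply, ← ih]
    exact LinearMap.congr_fun semiconj _

lemma subdivision_mem_supported {s : Set X} (hs : ∀ v l, (∀ x ∈ v :: l, x ∈ s) → β v l ∈ s)
    {l : List X} (hl : ∀ x ∈ l, x ∈ s) : subdivision K β (single l 1) ∈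
      supported K K {t | t.length = l.length ∧ ∀ x ∈ t, x ∈ s} := by
  induction hn : l.length generalizing l with
  | zero =>
    rw [List.length_eq_zero_iff.1 hn, subdivision_nil]
    exact single_mem_supported K _ (by simp)
  | succ n ih =>
    obtain ⟨v, l, rfl⟩ := List.exists_cons_of_length_eq_add_one hn
    have faces : subdivision K β (simplexBoundary K (v :: l)) ∈
        supported K K {t | t.length = n ∧ ∀ x ∈ t, x ∈ s} :=
      map_mem_of_mem_supported (fun t ht ↦ ih (fun x hx ↦ hl x (ht.1.subset hx))
        (by have := ht.2; omega)) (simplexBoundary_mem_supported _)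
    rw [subdivision_cons]
    refine cone_mem_supported (fun t ht ↦ ?_) faces
    exact ⟨by simp [ht.1], by simpa using ⟨hs v l hl, ht.2⟩⟩

end Subdivision

section Barycenter

variable {E : Type*} [NormedAddCommGroup E] [NormedSpace ℝ E]

lemma average_mem_of_convex {s : Set E} (hs : Convex ℝ s) {l : List E} (hl : l ≠ [])
    (h : ∀ x ∈ l, x ∈ s) : (l.length : ℝ)⁻¹ • l.sum ∈ s := by
  have hpos : 0 < l.length := List.length_pos_iff.2 hl
  rw [← Fin.sum_univ_getElem, Finset.smul_sum]
  refine hs.sum_mem (fun _ _ ↦ by positivity) ?_ fun i _ ↦ h _ (List.getElem_mem _)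
  simp [mul_inv_cancel₀ (Nat.cast_ne_zero (R := ℝ).2 hpos.ne')]

lemma dist_average_le {l : List E} {d : ℝ} (h : ∀ x ∈ l, ∀ y ∈ l, dist x y ≤ d) {x : E}
    (hx : x ∈ l) : dist ((l.length : ℝ)⁻¹ • l.sum) x ≤ (1 - 1 / l.length) * d := by
  obtain ⟨j, hj, rfl⟩ := List.getElem_of_mem hx
  have hpos : (0 : ℝ) < l.length := by exact_mod_cast (Nat.zero_le j).trans_lt hj
  have bound : ‖∑ i : Fin l.length, (l[i.1] - l[j])‖ ≤
      ∑ i : Fin l.length, if i = ⟨j, hj⟩ then 0 else d := by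
    refine norm_sum_le_of_le _ fun i _ ↦ ?_
    split_ifs with hij
    · simp [hij]
    · exact dist_eq_norm l[i.1] l[j] ▸ h _ (List.getElem_mem _) _ hx
  calc
    _ = ‖(l.length : ℝ)⁻¹ • ∑ i : Fin l.length, (l[i.1] - l[j])‖ := by
      rw [Finset.sum_sub_distrib, Fin.sum_univ_getElem, smul_sub, dist_eq_norm]
      simp [← Nat.cast_smul_eq_nsmul ℝ, inv_smul_smul₀ hpos.ne']
    _ ≤ (l.length : ℝ)⁻¹ * ((l.length - 1) * d) := by
      rw [norm_smul, norm_inv, Real.norm_natCast]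
      gcongr
      refine bound.trans_eq ?_
      simp [Finset.sum_ite, Finset.filter_ne', Finset.card_erase_of_mem,
        Nat.cast_sub (Nat.one_le_iff_ne_zero.2 (by exact_mod_cast hpos.ne'))]
    _ = _ := by field_simp

variable {C : Set E} (hC : Convex ℝ C)

/-- The barycenter of the points `v :: l` of a convex set, as a point of that set. -/
noncomputable def barycenter (v : C) (l : List C) : C :=
  ⟨((v :: l).length : ℝ)⁻¹ • ((v :: l).map Subtype.val).sum, by
    simpa only [List.length_map] using average_mem_of_convex hC (l := (v :: l).map Subtype.val)
      (by simp) (List.forall_mem_map.2 fun x _ ↦ x.2)⟩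

lemma barycenter_mem_closedBall {p : C} {r : ℝ} {v : C} {l : List C}
    (h : ∀ x ∈ v :: l, x ∈ Metric.closedBall p r) :
    barycenter hC v l ∈ Metric.closedBall p r := by
  have := average_mem_of_convex (convex_closedBall p.1 r) (l := (v :: l).map Subtype.val) (by simp)
    (List.forall_mem_map.2 h)
  rw [List.length_map] at this
  exact this

lemma dist_barycenter_le {v : C} {l : List C} {d : ℝ}
    (h : ∀ x ∈ v :: l, ∀ y ∈ v :: l, dist x y ≤ d) {x : C} (hx : x ∈ v :: l) :
    dist (barycenter hC v l) x ≤ (1 - 1 / (v :: l).length) * d := by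
  have := dist_average_le (List.forall_mem_map.2 fun y hy ↦ List.forall_mem_map.2 (h y hy))
    (List.mem_map_of_mem hx)
  rw [List.length_map] at this
  exact this

lemma map_barycenter {E' : Type*} [NormedAddCommGroup E'] [NormedSpace ℝ E'] {C' : Set E'}
    (hC' : Convex ℝ C') {φ : E →ₗ[ℝ] E'} {f : C → C'} (hf : ∀ x, (f x : E') = φ x) (v : C)
    (l : List C) : f (barycenter hC v l) = barycenter hC' (f v) (l.map f) := by
  have coe_comp : Subtype.val ∘ f = φ ∘ Subtype.val := funext hf
  apply Subtype.ext
  simp only [barycenter, hf, map_smul, map_list_sum, List.map_cons, List.map_map,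
    List.length_cons, List.length_map, coe_comp]

variable {K : Type*} [CommRing K]

lemma subdivision_mem_supported_dist_le {l : List C} {L : ℕ} (hL : l.length ≤ L) {d : ℝ}
    (h : ∀ x ∈ l, ∀ y ∈ l, dist x y ≤ d) : subdivision K (barycenter hC) (single l 1) ∈
      supported K K {t | t.length = l.length ∧
        ∀ x ∈ t, ∀ y ∈ t, dist x y ≤ (1 - 1 / L) * d} := by
  induction hn : l.length generalizing l with
  | zero =>
    rw [List.length_eq_zero_iff.1 hn, subdivision_nil]
    exact single_mem_supported K _ (by simp)
  | succ n ih =>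
    obtain ⟨v, l, rfl⟩ := List.exists_cons_of_length_eq_add_one hn
    set b := barycenter hC v l
    set r := (1 - 1 / (L : ℝ)) * d
    have near : ∀ x ∈ v :: l, x ∈ Metric.closedBall b r := fun x hx ↦ by
      rw [Metric.mem_closedBall']
      refine (dist_barycenter_le hC h hx).trans ?_
      have : 0 ≤ d := dist_nonneg.trans (h x hx x hx)
      have : 0 < (v :: l).length := by simp
      simp only [r]
      gcongr
    have faces : subdivision K (barycenter hC) (simplexBoundary K (v :: l)) ∈
        supported K K ({t | t.length = n ∧ ∀ x ∈ t, x ∈ Metric.closedBall b r} ∩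
          {t | t.length = n ∧ ∀ x ∈ t, ∀ y ∈ t, dist x y ≤ r}) := by
      refine map_mem_of_mem_supported (fun t ht ↦ ?_) (simplexBoundary_mem_supported _)
      have ht_length : t.length = n := by have := ht.2; omega
      rw [supported_inter]
      refine Submodule.mem_inf.2 ⟨?_, ih (ht.1.length_le.trans hL)
        (fun x hx y hy ↦ h x (ht.1.subset hx) y (ht.1.subset hy)) ht_length⟩
      rw [← ht_length]
      exact subdivision_mem_supported (fun v l ↦ barycenter_mem_closedBall hC)
        fun x hx ↦ near x (ht.1.subset hx)
    rw [subdivision_cons]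
    refine cone_mem_supported (fun t ht ↦ ?_) faces
    obtain ⟨⟨ht_length, ht_ball⟩, -, ht_dist⟩ := ht
    refine ⟨by simp [ht_length], ?_⟩
    rintro x (_ | ⟨_, hx⟩) y (_ | ⟨_, hy⟩)
    · exact (dist_self b).trans_le (dist_nonneg.trans (near v (by simp)))
    · exact Metric.mem_closedBall'.1 (ht_ball y hy)
    · exact ht_ball x hx
    · exact ht_dist x hx y hy

lemma subdivision_pow_mem_supported {l : List C} {d : ℝ} (h : ∀ x ∈ l, ∀ y ∈ l, dist x y ≤ d)
    (N : ℕ) : (subdivision K (barycenter hC) ^ N) (single l 1) ∈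
      supported K K {t | t.length = l.length ∧
        ∀ x ∈ t, ∀ y ∈ t, dist x y ≤ (1 - 1 / l.length) ^ N * d} := by
  induction N with
  | zero => exact single_mem_supported K _ (by simpa using h)
  | succ N ih =>
    rw [pow_succ' (subdivision _ _), Module.End.mul_apply]
    refine map_mem_of_mem_supported (fun t ht ↦ ?_) ih
    obtain ⟨ht_length, ht_dist⟩ := ht
    have := subdivision_mem_supported_dist_le hC (K := K) ht_length.le ht_dist
    rwa [ht_length, ← mul_assoc, ← pow_succ'] at this

end Barycenter

section SingularChains

variable (K : Type*) [CommRing K] (Y : Type*) [TopologicalSpace Y]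

/-- The singular simplices of `Y` with `n` vertices. There is exactly one for `n = 0`: it spans the
augmentation term of the singular chain complex. -/
abbrev SingularSimplex (n : ℕ) : Type _ := C(stdSimplex ℝ (Fin n), Y)

instance : IsEmpty (stdSimplex ℝ (Fin 0)) :=
  Set.isEmpty_coe_sort.2 (stdSimplex_of_isEmpty_index ℝ (Fin 0))

instance : Unique (SingularSimplex Y 0) where
  default := ⟨isEmptyElim, continuous_of_discreteTopology⟩
  uniq _ := ContinuousMap.ext isEmptyElim

/-- The face of a singular simplex opposite to its `i`-th vertex. -/
noncomputable def face {Y : Type*} [TopologicalSpace Y] {n : ℕ} (i : Fin (n + 1))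
    (σ : SingularSimplex Y (n + 1)) : SingularSimplex Y n :=
  σ.comp ⟨stdSimplex.map i.succAbove, stdSimplex.continuous_map _⟩

/-- The boundary operator of the augmented singular chain complex, on chains of simplices with
`n + 1` vertices. -/
noncomputable def singularBoundary (n : ℕ) :
    (SingularSimplex Y (n + 1) →₀ K) →ₗ[K] (SingularSimplex Y n →₀ K) :=
  ∑ i : Fin (n + 1), (-1 : ℤ) ^ (i : ℕ) • lmapDomain K K (face i)

variable {Y}

lemma singularBoundary_single {n : ℕ} (σ : SingularSimplex Y (n + 1)) (r : K) :
    singularBoundary K Y n (single σ r) =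
      ∑ i : Fin (n + 1), (-1 : ℤ) ^ (i : ℕ) • single (face i σ) r := by
  simp [singularBoundary]

variable {K}

lemma singularBoundary_zero_single (σ : SingularSimplex Y 1) (r : K) :
    singularBoundary K Y 0 (single σ r) = single default r := by
  rw [singularBoundary_single, Fin.sum_univ_one, Subsingleton.elim (face 0 σ) default]
  simp

lemma singularBoundary_zero_comp_singularBoundary :
    singularBoundary K Y 0 ∘ₗ singularBoundary K Y 1 = 0 := by
  refine lhom_ext fun σ r ↦ ?_
  rw [LinearMap.comp_apply, singularBoundary_single]
  simp only [map_sum, map_zsmul, singularBoundary_zero_single, ← Finset.sum_smul,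
    Fin.sum_neg_one_pow]
  simp

lemma singularBoundary_zero_surjective [Nonempty Y] :
    Function.Surjective (singularBoundary K Y 0) := by
  refine fun c ↦ ⟨single (.const _ (Classical.arbitrary Y)) (c default), ?_⟩
  rw [singularBoundary_zero_single, ← unique_single]

variable (K) {X : Type*}

/-- The chain of points of `X` obtained from a singular simplex `σ` by applying `F ∘ σ` to the
vertices of the `N`-th barycentric subdivision of the standard simplex, extended linearly. -/
noncomputable def subdividedImage (F : Y → X) (N n : ℕ) :
    (SingularSimplex Y n →₀ K) →ₗ[K] (List X →₀ K) :=
  linearCombination K fun σ ↦ pushforward K (F ∘ σ)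
    ((subdivision K (barycenter (convex_stdSimplex ℝ (Fin n))) ^ N)
      (single (List.ofFn stdSimplex.vertex) 1))

variable {K}

lemma subdividedImage_single (F : Y → X) (N n : ℕ) (σ : SingularSimplex Y n) :
    subdividedImage K F N n (single σ 1) = pushforward K (F ∘ σ)
      ((subdivision K (barycenter (convex_stdSimplex ℝ (Fin n))) ^ N)
        (single (List.ofFn stdSimplex.vertex) 1)) := by
  simp [subdividedImage]

lemma map_barycenter_stdSimplex {m n : ℕ} (f : Fin m → Fin n) (v : stdSimplex ℝ (Fin m))
    (l : List (stdSimplex ℝ (Fin m))) :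
    stdSimplex.map f (barycenter (convex_stdSimplex ℝ (Fin m)) v l) =
      barycenter (convex_stdSimplex ℝ (Fin n)) (stdSimplex.map f v) (l.map (stdSimplex.map f)) :=
  map_barycenter _ _ (φ := FunOnFinite.linearMap ℝ ℝ f) (fun _ ↦ rfl) v l

lemma subdividedImage_face (F : Y → X) (N : ℕ) {n : ℕ} (i : Fin (n + 1))
    (σ : SingularSimplex Y (n + 1)) : subdividedImage K F N n (single (face i σ) 1) =
      pushforward K (F ∘ σ) ((subdivision K (barycenter (convex_stdSimplex ℝ (Fin (n + 1)))) ^ N)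
        (single (List.ofFn (stdSimplex.vertex ∘ i.succAbove)) 1)) := by
  have vertices : List.ofFn (stdSimplex.vertex (S := ℝ) ∘ i.succAbove) =
      (List.ofFn stdSimplex.vertex).map (stdSimplex.map i.succAbove) := by
    simp [List.map_ofFn, Function.comp_def]
  rw [subdividedImage_single, vertices, ← pushforward_single,
    ← pushforward_subdivision_pow (map_barycenter_stdSimplex i.succAbove), pushforward_pushforward]
  rfl

lemma boundary_subdividedImage (F : Y → X) (N n : ℕ) (c : SingularSimplex Y (n + 1) →₀ K) :
    boundary K X (subdividedImage K F N (n + 1) c) =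
      subdividedImage K F N n (singularBoundary K Y n c) := by
  have : boundary K X ∘ₗ subdividedImage K F N (n + 1) =
      subdividedImage K F N n ∘ₗ singularBoundary K Y n := by
    ext1 σ; ext1
    simp only [LinearMap.comp_apply, lsingle_apply, singularBoundary_single, map_sum, map_zsmul,
      subdividedImage_face]
    simp only [subdividedImage_single, boundary_pushforward, boundary_subdivision_pow,
      boundary_single, simplexBoundary_ofFn, map_sum, map_zsmul]
  exact LinearMap.congr_fun this c

lemma subdividedImage_default (F : Y → X) (N : ℕ) :
    subdividedImage K F N 0 (single default 1) = single [] 1 := by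
  have fixed : (subdivision K (barycenter (convex_stdSimplex ℝ (Fin 0))) ^ N) (single [] 1) =
      single [] 1 := by
    induction N with
    | zero => rfl
    | succ N ih => rw [pow_succ, Module.End.mul_apply, subdivision_nil, ih]
  rw [subdividedImage_single, List.ofFn_zero, fixed, pushforward_single, List.map_nil]

lemma eventually_subdividedImage_single_mem_supported [PseudoMetricSpace X] {F : Y → X}
    (hF : Continuous F) {n : ℕ} (σ : SingularSimplex Y (n + 1)) {δ : ℝ} (hδ : 0 < δ) :
    ∀ᶠ N in Filter.atTop, subdividedImage K F N (n + 1) (single σ 1) ∈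
      supported K K (smallSimplices X δ (n + 1)) := by
  obtain ⟨η, hη, hσ⟩ := Metric.uniformContinuous_iff.1
    (CompactSpace.uniformContinuous_of_continuous (hF.comp σ.continuous)) δ hδ
  set vertices : List (stdSimplex ℝ (Fin (n + 1))) := List.ofFn stdSimplex.vertex
  set D := Metric.diam (Set.univ : Set (stdSimplex ℝ (Fin (n + 1))))
  have mesh (N : ℕ) := subdivision_pow_mem_supported (K := K) (convex_stdSimplex ℝ (Fin (n + 1)))
    (l := vertices) (d := D)
    (fun x _ y _ ↦ Metric.dist_le_diam_of_mem isCompact_univ.isBounded trivial trivial) N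
  have mesh_tendsto : Filter.Tendsto (fun N : ℕ ↦ (1 - 1 / (vertices.length : ℝ)) ^ N * D)
      Filter.atTop (nhds (0 * D)) := by
    refine (tendsto_pow_atTop_nhds_zero_of_lt_one ?_ ?_).mul_const D
    · simpa [vertices] using inv_le_one_of_one_le₀ (by simp : (1 : ℝ) ≤ n + 1)
    · simp only [List.length_ofFn, vertices, sub_lt_self_iff]
      positivity
  filter_upwards [mesh_tendsto.eventually (gt_mem_nhds (by simpa using hη))] with N hN
  rw [subdividedImage_single]
  refine map_mem_of_mem_supported (fun t ht ↦ ?_) (mesh N)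
  rw [pushforward_single]
  refine single_mem_supported K _ ⟨by simp [ht.1, vertices], ?_⟩
  exact List.forall_mem_map.2 fun x hx ↦ List.forall_mem_map.2 fun y hy ↦
    hσ ((ht.2 x hx y hy).trans_lt hN)

lemma eventually_subdividedImage_mem_supported [PseudoMetricSpace X] {F : Y → X}
    (hF : Continuous F) {n : ℕ} (c : SingularSimplex Y (n + 1) →₀ K) {δ : ℝ} (hδ : 0 < δ) :
    ∀ᶠ N in Filter.atTop, subdividedImage K F N (n + 1) c ∈
      supported K K (smallSimplices X δ (n + 1)) := by
  filter_upwards [(Filter.eventually_all_finset c.support).2 fun σ _ ↦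
    eventually_subdividedImage_single_mem_supported (K := K) hF σ hδ] with N hN
  exact map_mem_of_mem_supported hN (mem_supported_support K c)

section Action

variable {Γ : Type*} [Group Γ] [MulAction Γ Y] [ContinuousConstSMul Γ Y]

lemma singularBoundary_chainAction {n : ℕ} (b : MonoidAlgebra K Γ)
    (c : SingularSimplex Y (n + 1) →₀ K) : singularBoundary K Y n (chainAction K _ b c) =
      chainAction K _ b (singularBoundary K Y n c) := by
  refine map_chainAction (fun g c ↦ ?_) b c
  have : singularBoundary K Y n ∘ₗ permutationRep K Γ _ g =
      permutationRep K Γ _ g ∘ₗ singularBoundary K Y n := by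
    ext1 σ; ext1
    simp only [LinearMap.comp_apply, lsingle_apply, permutationRep_single, singularBoundary_single,
      map_sum, map_zsmul]
    rfl
  exact LinearMap.congr_fun this c

lemma subdividedImage_chainAction [MulAction Γ X] {F : Y → X}
    (hF : ∀ (g : Γ) y, F (g • y) = g • F y) (N n : ℕ) (b : MonoidAlgebra K Γ)
    (c : SingularSimplex Y n →₀ K) : subdividedImage K F N n (chainAction K _ b c) =
      chainAction K (List X) b (subdividedImage K F N n c) := by
  refine map_chainAction (fun g c ↦ ?_) b c
  have : subdividedImage K F N n ∘ₗ permutationRep K Γ _ g =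
      permutationRep K Γ _ g ∘ₗ subdividedImage K F N n := by
    ext1 σ; ext1
    simp only [LinearMap.comp_apply, lsingle_apply, permutationRep_single, subdividedImage_single]
    have hσ : F ∘ (g • σ : SingularSimplex Y n) = (g • ·) ∘ F ∘ σ := funext fun p ↦ hF g (σ p)
    rw [hσ, ← pushforward_pushforward]
    rfl
  exact LinearMap.congr_fun this c

end Action

end SingularChains

section BaseChange

variable {F : Type*} (K : Type*) [CommRing F] [CommRing K] [Algebra F K] {Y : Type*}
  [TopologicalSpace Y]

open scoped Classical in
lemma finsuppScalarRight_lTensor_singularBoundary (n : ℕ)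
    (t : TensorProduct F K (SingularSimplex Y (n + 1) →₀ F)) :
    TensorProduct.finsuppScalarRight F F K _ ((singularBoundary F Y n).lTensor K t) =
      singularBoundary K Y n (TensorProduct.finsuppScalarRight F F K _ t) := by
  have : (TensorProduct.finsuppScalarRight F F K _).toLinearMap ∘ₗ
        (singularBoundary F Y n).lTensor K =
      (singularBoundary K Y n).restrictScalars F ∘ₗ
        (TensorProduct.finsuppScalarRight F F K _).toLinearMap := by
    ext r σ : 4
    simp [singularBoundary_single, TensorProduct.tmul_sum,
      TensorProduct.finsuppScalarRight_apply_tmul, -zsmul_eq_mul, ← smul_single]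
  exact LinearMap.congr_fun this t

lemma exact_singularBoundary_baseChange [Module.Flat F K] {n : ℕ}
    (h : Function.Exact (singularBoundary F Y (n + 1)) (singularBoundary F Y n)) :
    Function.Exact (singularBoundary K Y (n + 1)) (singularBoundary K Y n) := by
  classical
  exact .of_ladder_linearEquiv_of_exact
    (g₁₂ := (singularBoundary K Y (n + 1)).restrictScalars F)
    (g₂₃ := (singularBoundary K Y n).restrictScalars F)
    (e₁ := TensorProduct.finsuppScalarRight F F K _)
    (e₂ := TensorProduct.finsuppScalarRight F F K _)
    (e₃ := TensorProduct.finsuppScalarRight F F K _)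
    (LinearMap.ext fun t ↦ (finsuppScalarRight_lTensor_singularBoundary K _ t).symm)
    (LinearMap.ext fun t ↦ (finsuppScalarRight_lTensor_singularBoundary K _ t).symm)
    (Module.Flat.lTensor_exact K h)

end BaseChange

section SingularTower

variable {K : Type*} [Field K] {a : ℕ} {ι : Type*} [Fintype ι] [DecidableEq ι] {α : ι → K}
  {Y : Type*} [TopologicalSpace Y] [MulAction (ElementaryAbelian a ι) Y]
  [ContinuousConstSMul (ElementaryAbelian a ι) Y]

lemma chainAction_genericElement_singularSimplex_zero (c : SingularSimplex Y 0 →₀ K) :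
    chainAction K _ (genericElement a α) c = 0 :=
  Finsupp.ext fun _ ↦ chainAction_genericElement_apply_fixed _ _ fun _ ↦ Subsingleton.elim _ _

variable (a α) in
/-- The chains `e 0, …, e N` are the images of the generators under an augmented
`K[x]/(x ^ a)`-linear chain map from the periodic resolution of `K`, truncated at degree `N`, to
the singular chains of `Y`, where `x` acts through `genericElement a α`. -/
structure IsSingularTower (N : ℕ) (e : ∀ j, SingularSimplex Y (j + 1) →₀ K) : Prop where
  boundary_zero : singularBoundary K Y 0 (e 0) = single default 1
  boundary_succ : ∀ j < N, singularBoundary K Y (j + 1) (e (j + 1)) =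
    chainAction K _ (genericElement a α ^ periodicExponent a j) (e j)

variable {N : ℕ} {e : ∀ j, SingularSimplex Y (j + 1) →₀ K}

lemma IsSingularTower.succ (he : IsSingularTower a α N e) {w : SingularSimplex Y (N + 2) →₀ K}
    (hw : singularBoundary K Y (N + 1) w =
      chainAction K _ (genericElement a α ^ periodicExponent a N) (e N)) :
    IsSingularTower a α (N + 1) (Function.update e (N + 1) w) where
  boundary_zero := by simpa using he.boundary_zero
  boundary_succ j hj := by
    rcases (Nat.lt_succ_iff.1 hj).lt_or_eq with hj | rfl
    · simpa [show j ≠ N + 1 by omega, hj.ne] using he.boundary_succ j hj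
    · simpa using hw

lemma IsSingularTower.exists_isTower_smallSimplices {X : Type*} [PseudoMetricSpace X]
    [MulAction (ElementaryAbelian a ι) X] (he : IsSingularTower a α N e) {F : Y → X}
    (hF : Continuous F) (hF_smul : ∀ (g : ElementaryAbelian a ι) y, F (g • y) = g • F y) {δ : ℝ}
    (hδ : 0 < δ) : ∃ e, IsTower (K := K) a α (fun j ↦ smallSimplices X δ (j + 1)) N e := by
  have small : ∀ᶠ n in Filter.atTop, ∀ j ∈ Finset.range (N + 1),
      subdividedImage K F n (j + 1) (e j) ∈ supported K K (smallSimplices X δ (j + 1)) :=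
    (Filter.eventually_all_finset _).2 fun j _ ↦ eventually_subdividedImage_mem_supported hF _ hδ
  obtain ⟨n, hn⟩ := small.exists
  refine ⟨fun j ↦ subdividedImage K F n (j + 1) (e j), ?_, ?_, ?_⟩
  · exact fun j hj ↦ hn j (Finset.mem_range_succ_iff.2 hj)
  · rw [boundary_subdividedImage, he.boundary_zero, subdividedImage_default]
  · intro j hj
    rw [boundary_subdividedImage, he.boundary_succ j hj, subdividedImage_chainAction hF_smul]

variable [Fact a.Prime] [CharP K a]

lemma IsSingularTower.boundary_chainAction_last (he : IsSingularTower a α N e) :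
    singularBoundary K Y N
      (chainAction K _ (genericElement a α ^ periodicExponent a N) (e N)) = 0 := by
  rw [singularBoundary_chainAction]
  cases N with
  | zero => simpa [periodicExponent] using chainAction_genericElement_singularSimplex_zero _
  | succ N =>
    rw [he.boundary_succ N N.lt_succ_self, ← Module.End.mul_apply, ← map_mul, ← pow_add,
      add_comm (periodicExponent a _), periodicExponent_add_succ (Fact.out : a.Prime).pos,
      genericElement_pow, map_zero, LinearMap.zero_apply]

variable (a α) in
lemma exists_isSingularTower [Nonempty Y] (hY : ∀ j < N,
      Function.Exact (singularBoundary K Y (j + 1)) (singularBoundary K Y j)) :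
    ∃ e : ∀ j, SingularSimplex Y (j + 1) →₀ K, IsSingularTower a α N e := by
  induction N with
  | zero =>
    refine ⟨fun j ↦ single (.const _ (Classical.arbitrary Y)) 1, ?_, by simp⟩
    rw [singularBoundary_zero_single]
  | succ N ih =>
    obtain ⟨e, he⟩ := ih fun j hj ↦ hY j (by omega)
    obtain ⟨w, hw⟩ := (hY N N.lt_succ_self _).1 he.boundary_chainAction_last
    exact ⟨_, he.succ hw⟩

end SingularTower

section Equivariant

lemma linearIndependent_X_fractionRing (F ι : Type*) [Field F] : LinearIndependent F
    fun i ↦ algebraMap (MvPolynomial ι F) (FractionRing (MvPolynomial ι F)) (.X i) :=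
  (MvPolynomial.linearIndependent_X ι F).map_injOn
    (IsScalarTower.toAlgHom F _ (FractionRing (MvPolynomial ι F))).toLinearMap
    (IsFractionRing.injective _ _).injOn

variable {a : ℕ} {ι : Type*} [Finite ι] {Y : Type*} [TopologicalSpace Y]
  [MulAction (ElementaryAbelian a ι) Y] [ContinuousConstSMul (ElementaryAbelian a ι) Y]
  {X : Type*} [MetricSpace X] [CompactSpace X] [MulAction (ElementaryAbelian a ι) X]
  [ContinuousConstSMul (ElementaryAbelian a ι) X] [Fact a.Prime]

theorem CoveringDimLE.not_exists_equivariant_map {k : ℕ} (hX : CoveringDimLE X k)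
    (hX_free : ∀ x : X, ∃ g : ElementaryAbelian a ι, g • x ≠ x) [Nonempty Y]
    (hY : ∀ j < k + 1,
      Function.Exact (singularBoundary (ZMod a) Y (j + 1)) (singularBoundary (ZMod a) Y j)) :
    ¬∃ F : Y → X, Continuous F ∧ ∀ (g : ElementaryAbelian a ι) y, F (g • y) = g • F y := by
  classical
  rintro ⟨F, hF, hF_smul⟩
  have : Fintype ι := Fintype.ofFinite ι
  have : NeZero a := ⟨(Fact.out : a.Prime).ne_zero⟩
  let K := FractionRing (MvPolynomial ι (ZMod a))
  have : CharP K a := charP_of_injective_algebraMap (algebraMap (ZMod a) K).injective a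
  let α (i : ι) : K := algebraMap (MvPolynomial ι (ZMod a)) K (.X i)
  obtain ⟨e, he⟩ := exists_isSingularTower a α fun j hj ↦
    exact_singularBoundary_baseChange K (hY j hj)
  let φ := OrbitMetric.homeomorph (ElementaryAbelian a ι) X
  have hφX : CoveringDimLE (OrbitMetric (ElementaryAbelian a ι) X) k := OrbitMetric.coveringDimLE hX
  refine hφX.not_forall_exists_smallTower hX_free
    (linearIndependent_X_fractionRing (ZMod a) ι) fun δ hδ ↦
      he.exists_isTower_smallSimplices (F := φ ∘ F) (φ.continuous.comp hF) (fun g y ↦ ?_) hδ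
  rw [Function.comp_apply, hF_smul, OrbitMetric.homeomorph_smul, Function.comp_apply]

end Equivariant

open Opposite

section LinearAlgebra

variable {K L M N : Type*} [Field K] [AddCommGroup L] [Module K L] [AddCommGroup M] [Module K M]
  [AddCommGroup N] [Module K N]

lemma exact_of_finrank_quotient_range {f : L →ₗ[K] M} {g : M →ₗ[K] N} (h_comp : g ∘ₗ f = 0)
    (hg : Function.Surjective g) [Module.Finite K (M ⧸ f.range)]
    (h_finrank : Module.finrank K (M ⧸ f.range) ≤ Module.finrank K N) : Function.Exact f g := by
  have h_le : f.range ≤ g.ker := LinearMap.range_le_ker_iff.2 h_comp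
  have h_surj : Function.Surjective (f.range.liftQ g h_le) :=
    LinearMap.range_eq_top.1 ((Submodule.range_liftQ _ _ _).trans (LinearMap.range_eq_top.2 hg))
  have : Module.Finite K N := .of_surjective _ h_surj
  have h_inj : Function.Injective (f.range.liftQ g h_le) :=
    (LinearMap.injective_iff_surjective_of_finrank_eq_finrank
      (h_finrank.antisymm (LinearMap.finrank_le_finrank_of_surjective h_surj))).2 h_surj
  refine LinearMap.exact_iff.2 (le_antisymm (fun x hx ↦ ?_) h_le)
  exact (Submodule.Quotient.mk_eq_zero _).1 (h_inj (hx.trans (map_zero _).symm))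

end LinearAlgebra

section Homology

variable (R : Type) [CommRing R] (Y : Type) [TopologicalSpace Y]

/-- The singular chain complex of `Y`. -/
noncomputable abbrev singularChainComplex : ChainComplex (ModuleCat R) ℕ :=
  (singularChainComplexFunctor R).obj (TopCat.of Y)

/-- Chains of singular simplices with `n + 1` vertices are the `n`-chains of the singular chain
complex. -/
noncomputable def chainEquiv (n : ℕ) :
    (SingularSimplex Y (n + 1) →₀ R) ≃ₗ[R] (singularChainComplex R Y).X n :=
  (Finsupp.domLCongr ((TopCat.of Y).toSSetObjEquiv (op (SimplexCategory.mk n))).symm :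
    _ ≃ₗ[R] ((TopCat.toSSet.obj (TopCat.of Y)).obj (op (SimplexCategory.mk n)) →₀ R))

variable {R Y}

lemma chainEquiv_single (n : ℕ) (σ : SingularSimplex Y (n + 1)) (r : R) :
    chainEquiv R Y n (single σ r) =
      (single (((TopCat.of Y).toSSetObjEquiv (op (SimplexCategory.mk n))).symm σ) r :
        (TopCat.toSSet.obj (TopCat.of Y)).obj (op (SimplexCategory.mk n)) →₀ R) :=
  Finsupp.domLCongr_single _ _ _

lemma map_δ_chainEquiv_single {n : ℕ} (i : Fin (n + 2)) (σ : SingularSimplex Y (n + 2)) (r : R) :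
    ((ModuleCat.free R).map ((TopCat.toSSet.obj (TopCat.of Y)).δ i)).hom
      (chainEquiv R Y (n + 1) (single σ r)) = chainEquiv R Y n (single (face i σ) r) := by
  rw [chainEquiv_single, chainEquiv_single]
  exact Finsupp.mapDomain_single

lemma hom_sum_zsmul_apply {M N : ModuleCat R} {ι : Type*} (s : Finset ι) (c : ι → ℤ)
    (f : ι → (M ⟶ N)) (x : M) : (∑ i ∈ s, c i • f i).hom x = ∑ i ∈ s, c i • (f i).hom x := by
  simp only [ModuleCat.hom_sum, ModuleCat.hom_zsmul, LinearMap.sum_apply, LinearMap.smul_apply]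

lemma d_chainEquiv (n : ℕ) (c : SingularSimplex Y (n + 2) →₀ R) :
    ((singularChainComplex R Y).d (n + 1) n).hom (chainEquiv R Y (n + 1) c) =
      chainEquiv R Y n (singularBoundary R Y (n + 1) c) := by
  induction c using Finsupp.induction_linear with
  | zero => simp only [map_zero]
  | add c c' hc hc' => simp only [map_add, hc, hc']
  | single σ r =>
    have d_eq : (singularChainComplex R Y).d (n + 1) n = ∑ i : Fin (n + 2), (-1 : ℤ) ^ (i : ℕ) •
        (ModuleCat.free R).map ((TopCat.toSSet.obj (TopCat.of Y)).δ i) :=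
      AlgebraicTopology.AlternatingFaceMapComplex.obj_d_eq _ n
    simp only [singularBoundary_single, map_sum, map_zsmul, ← map_δ_chainEquiv_single]
    exact (congrArg (fun f ↦ f.hom (chainEquiv R Y (n + 1) (single σ r))) d_eq).trans
      (hom_sum_zsmul_apply _ _ _ _)

end Homology

section Acyclic

variable {R : Type} [CommRing R] {Y : Type} [TopologicalSpace Y]

variable (R) in
/-- The singular chain complex of a point has zero and identity maps as alternating
differentials. -/
noncomputable def singularChainComplexPointIso : singularChainComplex R PUnit ≅
    ChainComplex.alternatingConst.obj ((ModuleCat.free R).obj PUnit) :=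
  (AlgebraicTopology.alternatingFaceMapComplex _).mapIso
    (((SimplicialObject.whiskering _ _).obj _).mapIso
    (TopCat.toSSetIsoConst (TopCat.of PUnit)) ≪≫ Functor.constComp _ _ _) ≪≫
    AlgebraicTopology.alternatingFaceMapComplexConst.app _

lemma isZero_singularHomology_punit {n : ℕ} (hn : n ≠ 0) :
    Limits.IsZero (singularHomology R n PUnit) :=
  ((ChainComplex.alternatingConst_exactAt _ _ hn).of_iso
    (singularChainComplexPointIso R).symm).isZero_homology

lemma exact_singularBoundary_succ {n : ℕ}
    (e : singularHomology R (n + 1) Y ≅ singularHomology R (n + 1) PUnit) :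
    Function.Exact (singularBoundary R Y (n + 2)) (singularBoundary R Y (n + 1)) := by
  have h_exact : (singularChainComplex R Y).ExactAt (n + 1) :=
    (HomologicalComplex.exactAt_iff_isZero_homology _ _).2
      ((isZero_singularHomology_punit n.succ_ne_zero).of_iso e)
  rw [HomologicalComplex.exactAt_iff' _ (n + 2) (n + 1) n (by simp) (by simp),
    ShortComplex.ShortExact.moduleCat_exact_iff_function_exact] at h_exact
  exact (Function.Exact.iff_of_ladder_linearEquiv
    (e₁ := chainEquiv R Y (n + 2)) (e₂ := chainEquiv R Y (n + 1)) (e₃ := chainEquiv R Y n)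
    (LinearMap.ext (d_chainEquiv (n + 1))) (LinearMap.ext (d_chainEquiv n))).1 h_exact

variable {K : Type} [Field K]

lemma finrank_singularHomology_zero_punit : Module.finrank K (singularHomology K 0 PUnit) = 1 := by
  have e : singularHomology K 0 PUnit ≅ (ModuleCat.free K).obj PUnit :=
    (HomologicalComplex.homologyFunctor _ _ 0).mapIso (singularChainComplexPointIso K) ≪≫
      ChainComplex.alternatingConstHomologyZero _
  exact e.toLinearEquiv.finrank_eq.trans ((Module.finrank_finsupp_self K).trans Fintype.card_punit)

lemma exact_singularBoundary_zero [Nonempty Y]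
    (e : singularHomology K 0 Y ≅ singularHomology K 0 PUnit) :
    Function.Exact (singularBoundary K Y 1) (singularBoundary K Y 0) := by
  let C := singularChainComplex K Y
  have : IsIso (C.homologyι 0) := ChainComplex.isIso_homologyι₀ C
  let e_coker : C.opcycles 0 ≅ ModuleCat.of K (C.X 0 ⧸ (C.d 1 0).hom.range) :=
    (C.opcyclesIsCokernel 1 0 (by simp)).coconePointUniqueUpToIso
      (ModuleCat.cokernelIsColimit (C.d 1 0))
  have h_range : (singularBoundary K Y 1).range.map (chainEquiv K Y 0).toLinearMap =
      (C.d 1 0).hom.range := by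
    rw [← LinearMap.range_comp, ← LinearMap.range_comp_of_range_eq_top _ (chainEquiv K Y 1).range]
    exact congrArg LinearMap.range (LinearMap.ext fun c ↦ (d_chainEquiv 0 c).symm)
  have h_finrank : Module.finrank K
      ((SingularSimplex Y 1 →₀ K) ⧸ (singularBoundary K Y 1).range) = 1 :=
    (Submodule.Quotient.equiv _ _ (chainEquiv K Y 0) h_range ≪≫ₗ
      (e_coker.symm ≪≫ (asIso (C.homologyι 0)).symm ≪≫ e).toLinearEquiv).finrank_eq.trans
      finrank_singularHomology_zero_punit
  have := Module.finite_of_finrank_eq_succ h_finrank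
  refine exact_of_finrank_quotient_range singularBoundary_zero_comp_singularBoundary
    singularBoundary_zero_surjective ?_
  rw [h_finrank, Module.finrank_finsupp_self, Fintype.card_unique]

lemma exact_singularBoundary_of_isAcyclicSpace {a : ℕ} [Fact a.Prime] {k : ℕ}
    (hY : IsAcyclicSpace a Y k) {j : ℕ} (hj : j < k + 1) :
    Function.Exact (singularBoundary (ZMod a) Y (j + 1)) (singularBoundary (ZMod a) Y j) := by
  have : Nonempty Y := hY.1
  cases j with
  | zero => exact exact_singularBoundary_zero (hY.2 0 (by simp)).some
  | succ n => exact exact_singularBoundary_succ (hY.2 (n + 1) (by grind)).some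

end Acyclic

end OzaydinVolovikov

open OzaydinVolovikov in
theorem ozaydin_volovikov_general {ι : Type*} [Finite ι] {a k : ℕ} (ha : a.Prime)
    (Y : Type) [TopologicalSpace Y] (actY : (ι → ZMod a) → Y → Y)
    (hYcont : ∀ g, Continuous (actY g)) (hYone : ∀ y, actY 0 y = y)
    (hYmul : ∀ g h y, actY (g + h) y = actY g (actY h y))
    {X : Type*} [MetricSpace X] [CompactSpace X] (hX : CoveringDimLE X k)
    (actX : (ι → ZMod a) → X → X)
    (hXcont : ∀ g, Continuous (actX g)) (hXone : ∀ x, actX 0 x = x)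
    (hXmul : ∀ g h x, actX (g + h) x = actX g (actX h x))
    (hXfree : ∀ x, ∃ g, actX g x ≠ x) (hacyc : IsAcyclicSpace a Y k) :
    ¬ ∃ F : Y → X, Continuous F ∧ ∀ g y, F (actY g y) = actX g (F y) := by
  have : Fact a.Prime := ⟨ha⟩
  have : Nonempty Y := hacyc.1
  let _ : MulAction (ElementaryAbelian a ι) Y :=
    { smul g := actY g.toAdd, one_smul := hYone, mul_smul _ _ := hYmul _ _ }
  let _ : MulAction (ElementaryAbelian a ι) X :=
    { smul g := actX g.toAdd, one_smul := hXone, mul_smul _ _ := hXmul _ _ }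
  have : ContinuousConstSMul (ElementaryAbelian a ι) Y := ⟨fun _ ↦ hYcont _⟩
  have : ContinuousConstSMul (ElementaryAbelian a ι) X := ⟨fun _ ↦ hXcont _⟩
  exact hX.not_exists_equivariant_map hXfree fun _ hj ↦
    exact_singularBoundary_of_isAcyclicSpace hacyc hj

/-!
STATEMENT 5 (Özaydin–Volovikov lemma).
Let `a` be a prime, `G = (ℤ/a)^m`, and `k ≥ 0`. Suppose `G` acts continuously and without fixed
points on a space `Y` and on the sphere `S^k` (the unit sphere of `ℝ^{k+1}`), and `Y` is
`k`-acyclic with `ℤ/a` coefficients. Then there is no `G`-equivariant continuous map `Y → S^k`.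
An action of the (additive) group `G` is encoded as a family of continuous maps `act g`
satisfying the action laws; it is fixed-point free if no point is fixed by every `g ∈ G`.
-/
theorem ozaydin_volovikov
    (a m k : ℕ) (ha : a.Prime)
    (Y : Type) [TopologicalSpace Y]
    (actY : (Fin m → ZMod a) → Y → Y)
    (hYcont : ∀ g, Continuous (actY g))
    (hYone : ∀ y, actY 0 y = y)
    (hYmul : ∀ g h y, actY (g + h) y = actY g (actY h y))
    (hYfree : ∀ y, ∃ g, actY g y ≠ y)
    (actS : (Fin m → ZMod a) →
      (Metric.sphere (0 : EuclideanSpace ℝ (Fin (k + 1))) 1 : Set _) →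
      (Metric.sphere (0 : EuclideanSpace ℝ (Fin (k + 1))) 1 : Set _))
    (hScont : ∀ g, Continuous (actS g))
    (hSone : ∀ y, actS 0 y = y)
    (hSmul : ∀ g h y, actS (g + h) y = actS g (actS h y))
    (hSfree : ∀ y, ∃ g, actS g y ≠ y)
    (hacyc : IsAcyclicSpace a Y k) :
    ¬ ∃ F : Y → (Metric.sphere (0 : EuclideanSpace ℝ (Fin (k + 1))) 1 : Set _),
        Continuous F ∧ ∀ g y, F (actY g y) = actS g (F y) := by
  exact ozaydin_volovikov_general ha Y actY hYcont hYone hYmul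
    (OzaydinVolovikov.coveringDimLE_sphere k) actS hScont hSone hSmul hSfree hacyc
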